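/- Consider the detection problem: under 𝒬, Ỹ ∈ ℝ^{N×n} has i.i.d. N(0, 1/N) entries; under 𝒫, draw v ∼ BR(N,ρ) and a uniformly random orthogonal Q ∈ ℝ^{n×n}, let Y have first column v and remaining columns i.i.d. N(0, (1/N) I_N), and observe Ỹ = YQ. For any constants ℓ ≥ 1, d ≥ 1, ε ∈ (0,1), there exist constants N₀, C₁ > 0, and there is a universal constant C₂ > 0, such that the following holds for all N ≥ N₀. Let M = M(Ỹ) be any real symmetric matrix of dimension at most N^ℓ whose entries are polynomials of degree at most d in the entries of Ỹ, and let t > 0 be any threshold. If nρ ≥ √N·(log N)^{C₂}, then it is impossible that both ℙ_𝒫{‖M‖ ≥ (1+ε)t} ≥ 1 − ε/4 and ℙ_𝒬{‖M‖ ≥ t} ≤ N^{−C₁} hold. -/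

import Mathlib

open MeasureTheory ProbabilityTheory Matrix

/-- Euclidean norm of a vector in `ℝ^k`. -/
noncomputable def eucNorm {k : ℕ} (v : Fin k → ℝ) : ℝ := Real.sqrt (∑ i, (v i) ^ 2)

/-- ℓ_p norm of a vector in `ℝ^k`. -/
noncomputable def lpNorm {k : ℕ} (p : ℝ) (v : Fin k → ℝ) : ℝ := (∑ i, |v i| ^ p) ^ (1 / p)

/-- Supremum (ℓ_∞) norm of a vector in `ℝ^k`. -/
noncomputable def supNorm {k : ℕ} (v : Fin k → ℝ) : ℝ := ⨆ i, |v i|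

/-- The Gaussian measure `N(0, σ2 · I_k)` on `ℝ^k`. -/
noncomputable def gaussVec (k : ℕ) (σ2 : NNReal) : Measure (Fin k → ℝ) :=
  Measure.pi fun _ => gaussianReal 0 σ2

instance (k : ℕ) (σ2 : NNReal) : IsProbabilityMeasure (gaussVec k σ2) := by
  unfold gaussVec; infer_instance

/-- The law of `N` i.i.d. samples from `N(0, σ2 · I_k)`. -/
noncomputable def iidGaussVec (N k : ℕ) (σ2 : NNReal) : Measure (Fin N → Fin k → ℝ) :=
  Measure.pi fun _ => gaussVec k σ2

/-- Concatenation `(a, bᵀ)ᵀ ∈ ℝ^n` of a scalar `a` with a vector `b ∈ ℝ^{n-1}`. -/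
noncomputable def rowCat {n : ℕ} (a : ℝ) (b : Fin (n - 1) → ℝ) : Fin n → ℝ :=
  fun j => if h : (j : ℕ) = 0 then a else b ⟨(j : ℕ) - 1, by have := j.isLt; omega⟩

/-- The `N × n` matrix whose rows are `y_iᵀ = (v_i, b_iᵀ)`, i.e. whose first column is `v`
and whose remaining `n - 1` columns are given by `B`. -/
noncomputable def gaussBasis {N n : ℕ} (v : Fin N → ℝ) (B : Fin N → Fin (n - 1) → ℝ) :
    Matrix (Fin N) (Fin n) ℝ :=
  Matrix.of fun i => rowCat (v i) (B i)

/-- The matrix `M(Y) = ∑_i (‖y_i‖² - (n-1)/N) y_i y_iᵀ - (3/N) I_n` built from the rows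
`y_iᵀ` of `Y`. -/
noncomputable def specMat {N n : ℕ} (Y : Matrix (Fin N) (Fin n) ℝ) :
    Matrix (Fin n) (Fin n) ℝ :=
  (∑ i, ((∑ j, (Y i j) ^ 2) - ((n : ℝ) - 1) / N) • Matrix.vecMulVec (Y i) (Y i))
    - ((3 : ℝ) / N) • (1 : Matrix (Fin n) (Fin n) ℝ)

/-- `u` is a unit leading eigenvector of the (symmetric) matrix `M`: a unit eigenvector
whose eigenvalue has the largest absolute value among all eigenvalues of `M`. -/
def IsLeadingEigen {n : ℕ} (M : Matrix (Fin n) (Fin n) ℝ) (u : Fin n → ℝ) : Prop :=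
  eucNorm u = 1 ∧ ∃ μ : ℝ, M.mulVec u = μ • u ∧
    ∀ μ' : ℝ, (∃ w : Fin n → ℝ, w ≠ 0 ∧ M.mulVec w = μ' • w) → |μ'| ≤ |μ|

/-- The quantity `η = η(N, n, v, δ)` with universal constant `C`. -/
noncomputable def etaBound (C : ℝ) (N n : ℕ) (v : Fin N → ℝ) (δ : ℝ) : ℝ :=
  C * ((eucNorm v + 1) * n * Real.sqrt (Real.log (N / δ)) / (N : ℝ) ^ ((3 : ℝ) / 2)
    + lpNorm 4 v ^ 2 * Real.sqrt (n * Real.log (N / δ)) / N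
    + lpNorm 6 v ^ 3 * (Real.sqrt n + Real.sqrt (Real.log (N / δ))) / Real.sqrt N
    + supNorm v ^ 2 * (n * Real.log (N / δ) + (Real.log (N / δ)) ^ 2) / N
    + (n * Real.log (N / δ)) ^ ((3 : ℝ) / 2) / (N : ℝ) ^ 2
    + |eucNorm v ^ 2 - 1| / N)

/-- The Bernoulli–Rademacher distribution on `ℝ`: `0` w.p. `1-ρ`, `±1/√(Nρ)` w.p. `ρ/2` each. -/
noncomputable def brMeasure (N : ℕ) (ρ : ℝ) : Measure ℝ :=
  (Real.toNNReal (1 - ρ)) • Measure.dirac 0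
    + (Real.toNNReal (ρ / 2)) • Measure.dirac (Real.sqrt (N * ρ))⁻¹
    + (Real.toNNReal (ρ / 2)) • Measure.dirac (-(Real.sqrt (N * ρ))⁻¹)

instance (N : ℕ) (ρ : ℝ) : IsFiniteMeasure (brMeasure N ρ) := by
  unfold brMeasure; infer_instance

/-- The law of a Bernoulli–Rademacher vector `v ∼ BR(N, ρ)` with i.i.d. entries. -/
noncomputable def brVec (N : ℕ) (ρ : ℝ) : Measure (Fin N → ℝ) :=
  Measure.pi fun _ => brMeasure N ρ

instance (N : ℕ) (ρ : ℝ) : IsFiniteMeasure (brVec N ρ) := by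
  unfold brVec; infer_instance

/-- Spectral (ℓ₂ operator) norm of a real matrix. -/
noncomputable def specNorm {m k : ℕ} (M : Matrix (Fin m) (Fin k) ℝ) : ℝ :=
  ‖LinearMap.toContinuousLinearMap (Matrix.toEuclideanLin M)‖

/-!
For `K = 2 ^ q` of order `log N`, the squared Frobenius norm of `M ^ K` is a polynomial `f` of
degree `D = 2 K d = O(log N)` with `‖M‖ ^ (2K) ≤ f ≤ m ‖M‖ ^ (2K)`, and the dimension factor `m` is
negligible against `(1 + ε) ^ (2K)`.

Under the null, Gaussian hypercontractivity and the tail bound `N ^ (-C₁)` force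
`𝔼 f² ≤ 2 (m t ^ (2K))²`. Under the planted law, `(𝔼 f)²` is at most `𝔼 f²` under the null times the
squared norm of the degree-`D` part of the likelihood ratio, so a bound on that norm contradicts
Markov's inequality.

The norm is expanded in Hermite polynomials. Given `v` and `Q`, each coefficient factors into
Hermite moments of the entries of `v` and a monomial in the first row of `Q`; squaring introduces
a second replica of `Q`, and the overlap of the two rows has moments of size `n ^ (-k / 2)` by
Khintchine's inequality. The odd and the second Hermite moments of a Bernoulli–Rademacher variable
vanish, so only the orders `k ≥ 4` remain; when `n ρ ≥ √N (log N) ^ 5` they contribute at most a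
factor of order `(1 + 1 / N) ^ N`.
-/

/-! ### Random variables with moments of all orders -/

/-- `f` has finite absolute moments of every order; unlike integrability, this is stable under
products, so that it passes to polynomials in such random variables. -/
def HasAllMoments {Ω : Type*} [MeasurableSpace Ω] (f : Ω → ℝ) (μ : Measure Ω) : Prop :=
  ∀ p : NNReal, MemLp f p μ

namespace HasAllMoments

variable {Ω Ω' : Type*} [MeasurableSpace Ω] [MeasurableSpace Ω'] {μ : Measure Ω} {ν : Measure Ω'}
  {f g : Ω → ℝ}

lemma memLp_two (hf : HasAllMoments f μ) : MemLp f 2 μ := hf 2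

lemma integrable (hf : HasAllMoments f μ) : Integrable f μ := memLp_one_iff_integrable.1 (hf 1)

lemma add (hf : HasAllMoments f μ) (hg : HasAllMoments g μ) :
    HasAllMoments (fun ω => f ω + g ω) μ :=
  fun p => (hf p).add (hg p)

lemma mul (hf : HasAllMoments f μ) (hg : HasAllMoments g μ) :
    HasAllMoments (fun ω => f ω * g ω) μ := fun p => by
  have : ENNReal.HolderTriple ((2 * p : NNReal) : ENNReal) ((2 * p : NNReal) : ENNReal) p := by
    constructor
    push_cast
    rw [ENNReal.mul_inv (by simp) (by simp), ← add_mul, ENNReal.inv_two_add_inv_two, one_mul]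
  exact MemLp.mul' (hg (2 * p)) (hf (2 * p))

lemma comp_measurePreserving {φ : Ω' → Ω} (hf : HasAllMoments f μ)
    (hφ : MeasurePreserving φ ν μ) : HasAllMoments (fun ω => f (φ ω)) ν :=
  fun p => (hf p).comp_measurePreserving hφ

lemma pi_eval {ι : Type*} [Fintype ι] [IsProbabilityMeasure μ] (hf : HasAllMoments f μ) (i : ι) :
    HasAllMoments (fun ω : ι → Ω => f (ω i)) (Measure.pi fun _ : ι => μ) :=
  hf.comp_measurePreserving (measurePreserving_eval (fun _ : ι => μ) i)

variable [IsFiniteMeasure μ]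

lemma of_bound (hf : AEStronglyMeasurable f μ) (C : ℝ) (h : ∀ᵐ ω ∂μ, ‖f ω‖ ≤ C) :
    HasAllMoments f μ := fun _ => MemLp.of_bound hf C h

lemma const (c : ℝ) : HasAllMoments (fun _ : Ω => c) μ := fun _ => memLp_const c

lemma mvPolynomial_eval {σ : Type*} {F : Ω → σ → ℝ} (hF : ∀ i, HasAllMoments (fun ω => F ω i) μ)
    (p : MvPolynomial σ ℝ) : HasAllMoments (fun ω => MvPolynomial.eval (F ω) p) μ := by
  induction p using MvPolynomial.induction_on with
  | C a => simpa only [MvPolynomial.eval_C] using const a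
  | add p q hp hq => simpa only [map_add] using hp.add hq
  | mul_X p i hp => simpa only [map_mul, MvPolynomial.eval_X] using hp.mul (hF i)

end HasAllMoments

lemma sq_integral_mul_le_integral_sq_mul_integral_sq {Ω : Type*} [MeasurableSpace Ω]
    {μ : Measure Ω} {f g : Ω → ℝ} (hf : MemLp f 2 μ) (hg : MemLp g 2 μ) :
    (∫ ω, f ω * g ω ∂μ) ^ 2 ≤ (∫ ω, f ω ^ 2 ∂μ) * ∫ ω, g ω ^ 2 ∂μ := by
  have quadratic_nonneg : ∀ t : ℝ, 0 ≤ (∫ ω, g ω ^ 2 ∂μ) * (t * t) +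
      (2 * ∫ ω, f ω * g ω ∂μ) * t + ∫ ω, f ω ^ 2 ∂μ := fun t => by
    have hgi := hg.integrable_sq.mul_const (t * t)
    have hfg : Integrable (fun ω => f ω * g ω * (2 * t)) μ :=
      (hf.integrable_mul hg).mul_const (2 * t)
    have hsum : Integrable (fun ω => g ω ^ 2 * (t * t) + f ω * g ω * (2 * t)) μ := hgi.add hfg
    calc 0 ≤ ∫ ω, (f ω + t * g ω) ^ 2 ∂μ := integral_nonneg fun ω => sq_nonneg _
      _ = ∫ ω, (g ω ^ 2 * (t * t) + f ω * g ω * (2 * t) + f ω ^ 2) ∂μ := by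
        congr 1 with ω
        ring
      _ = _ := by
        rw [integral_add hsum hf.integrable_sq, integral_add hgi hfg,
          integral_mul_const, integral_mul_const]
        ring
  have h := discrim_le_zero quadratic_nonneg
  rw [discrim] at h
  linarith

/-! ### Gaussian integration by parts -/

lemma hasDerivAt_gaussianPDFReal_zero_one (x : ℝ) :
    HasDerivAt (gaussianPDFReal 0 1) (-x * gaussianPDFReal 0 1 x) x := by
  have h : HasDerivAt (fun y : ℝ => -(y - 0) ^ 2 / (2 * (1 : NNReal))) (-x) x := by
    convert! ((((hasDerivAt_id x).sub_const 0).pow 2).neg).div_const (2 * ((1 : NNReal) : ℝ))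
      using 1
    simp [neg_div]
  unfold gaussianPDFReal
  convert! h.exp.const_mul ((√(2 * Real.pi * (1 : NNReal)))⁻¹) using 1
  ring

lemma integrable_mul_gaussianPDFReal {f : ℝ → ℝ} {μ : ℝ} {v : NNReal} (hv : v ≠ 0)
    (hf : Integrable f (gaussianReal μ v)) :
    Integrable (fun x => f x * gaussianPDFReal μ v x) := by
  rw [gaussianReal_of_var_ne_zero _ hv, integrable_withDensity_iff_integrable_smul'
    (measurable_gaussianPDF _ _) (ae_of_all _ fun _ => gaussianPDF_lt_top)] at hf
  simpa [toReal_gaussianPDF, mul_comm] using hf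

lemma integral_mul_gaussianReal_zero_one_eq_integral_deriv {f f' : ℝ → ℝ}
    (hf : ∀ x, HasDerivAt f (f' x) x) (hfi : Integrable f (gaussianReal 0 1))
    (hf'i : Integrable f' (gaussianReal 0 1))
    (hxf : Integrable (fun x => x * f x) (gaussianReal 0 1)) :
    ∫ x, x * f x ∂gaussianReal 0 1 = ∫ x, f' x ∂gaussianReal 0 1 := by
  have hone : (1 : NNReal) ≠ 0 := one_ne_zero
  have hxf' : Integrable (fun x => f x * (-x * gaussianPDFReal 0 1 x)) := by
    refine (integrable_mul_gaussianPDFReal hone hxf).neg.congr (ae_of_all _ fun x => ?_)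
    simp only [Pi.neg_apply]
    ring
  have parts := integral_mul_deriv_eq_deriv_mul_of_integrable (fun x _ => hf x)
    (fun x _ => hasDerivAt_gaussianPDFReal_zero_one x) hxf'
    (integrable_mul_gaussianPDFReal hone hf'i) (integrable_mul_gaussianPDFReal hone hfi)
  rw [integral_gaussianReal_eq_integral_smul hone, integral_gaussianReal_eq_integral_smul hone]
  calc ∫ x, gaussianPDFReal 0 1 x • (x * f x)
      = -∫ x, f x * (-x * gaussianPDFReal 0 1 x) := by
        rw [← integral_neg]
        congr 1 with x
        rw [smul_eq_mul]
        ring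
    _ = ∫ x, gaussianPDFReal 0 1 x • f' x := by
        rw [parts, neg_neg]
        congr 1 with x
        exact mul_comm _ _

lemma hasAllMoments_id_gaussianReal (μ : ℝ) (v : NNReal) :
    HasAllMoments (fun x => x) (gaussianReal μ v) := memLp_id_gaussianReal

lemma integral_pow_succ_gaussianReal_zero_one (k : ℕ) :
    ∫ x, x * x ^ k ∂gaussianReal 0 1 = ∫ x, (k : ℝ) * x ^ (k - 1) ∂gaussianReal 0 1 := by
  have hpow : ∀ j, HasAllMoments (fun x : ℝ => x ^ j) (gaussianReal 0 1) := fun j => by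
    simpa using HasAllMoments.mvPolynomial_eval
      (fun _ : Unit => hasAllMoments_id_gaussianReal 0 1) (MvPolynomial.X () ^ j)
  exact integral_mul_gaussianReal_zero_one_eq_integral_deriv (fun x => hasDerivAt_pow k x)
    (hpow k).integrable ((hpow (k - 1)).integrable.const_mul _)
    ((hasAllMoments_id_gaussianReal 0 1).mul (hpow k)).integrable

section GaussianExp

variable {σ : Type*} [Fintype σ]

/-- The law of a family of independent standard Gaussian variables indexed by `σ`. -/
noncomputable abbrev stdGaussianPi (σ : Type*) [Fintype σ] : Measure (σ → ℝ) :=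
  Measure.pi fun _ => gaussianReal 0 1

lemma hasAllMoments_eval_stdGaussianPi (p : MvPolynomial σ ℝ) :
    HasAllMoments (fun x => MvPolynomial.eval x p) (stdGaussianPi σ) :=
  HasAllMoments.mvPolynomial_eval (fun i => (hasAllMoments_id_gaussianReal 0 1).pi_eval i) p

/-- The expectation `𝔼 p(g)` of a polynomial in independent standard Gaussian variables. -/
noncomputable def gaussianExp : MvPolynomial σ ℝ →ₗ[ℝ] ℝ where
  toFun p := ∫ x, MvPolynomial.eval x p ∂stdGaussianPi σ
  map_add' p q := by
    simp only [map_add]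
    exact integral_add (hasAllMoments_eval_stdGaussianPi p).integrable
      (hasAllMoments_eval_stdGaussianPi q).integrable
  map_smul' a p := by
    simp only [MvPolynomial.smul_eval, integral_const_mul, RingHom.id_apply, smul_eq_mul]

lemma gaussianExp_apply (p : MvPolynomial σ ℝ) :
    gaussianExp p = ∫ x, MvPolynomial.eval x p ∂stdGaussianPi σ := rfl

lemma gaussianExp_one : gaussianExp (1 : MvPolynomial σ ℝ) = 1 := by simp [gaussianExp_apply]

lemma gaussianExp_nonneg {p : MvPolynomial σ ℝ} (hp : ∀ x, 0 ≤ MvPolynomial.eval x p) :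
    0 ≤ gaussianExp p :=
  integral_nonneg hp

lemma gaussianExp_mono {p q : MvPolynomial σ ℝ}
    (h : ∀ x, MvPolynomial.eval x p ≤ MvPolynomial.eval x q) : gaussianExp p ≤ gaussianExp q :=
  integral_mono (hasAllMoments_eval_stdGaussianPi p).integrable
    (hasAllMoments_eval_stdGaussianPi q).integrable h

lemma sq_gaussianExp_mul_le (p q : MvPolynomial σ ℝ) :
    gaussianExp (p * q) ^ 2 ≤ gaussianExp (p ^ 2) * gaussianExp (q ^ 2) := by
  simpa only [gaussianExp_apply, map_mul, map_pow] using
    sq_integral_mul_le_integral_sq_mul_integral_sq (hasAllMoments_eval_stdGaussianPi p).memLp_two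
      (hasAllMoments_eval_stdGaussianPi q).memLp_two

lemma gaussianExp_monomial (u : σ →₀ ℕ) (a : ℝ) :
    gaussianExp (MvPolynomial.monomial u a) = a * ∏ i, ∫ x, x ^ u i ∂gaussianReal 0 1 := by
  simp only [gaussianExp_apply, MvPolynomial.eval_monomial, Finsupp.prod_pow]
  rw [integral_const_mul, integral_fintype_prod_eq_prod (fun i (y : ℝ) => y ^ u i)]

lemma gaussianExp_X_mul (i : σ) (p : MvPolynomial σ ℝ) :
    gaussianExp (MvPolynomial.X i * p) = gaussianExp (MvPolynomial.pderiv i p) := by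
  classical
  induction p using MvPolynomial.induction_on' with
  | monomial u a =>
    have off_diag : ∀ j ∈ Finset.univ.erase i, (Finsupp.single i 1 : σ →₀ ℕ) j = 0 :=
      fun j hj => Finsupp.single_eq_of_ne (Finset.ne_of_mem_erase hj)
    have prod_add : ∏ j ∈ Finset.univ.erase i,
          ∫ x, x ^ (Finsupp.single i 1 + u : σ →₀ ℕ) j ∂gaussianReal 0 1 =
        ∏ j ∈ Finset.univ.erase i, ∫ x, x ^ u j ∂gaussianReal 0 1 :=
      Finset.prod_congr rfl fun j hj => by rw [Finsupp.add_apply, off_diag j hj, zero_add]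
    have prod_sub : ∏ j ∈ Finset.univ.erase i,
          ∫ x, x ^ (u - Finsupp.single i 1 : σ →₀ ℕ) j ∂gaussianReal 0 1 =
        ∏ j ∈ Finset.univ.erase i, ∫ x, x ^ u j ∂gaussianReal 0 1 :=
      Finset.prod_congr rfl fun j hj => by rw [Finsupp.tsub_apply, off_diag j hj, tsub_zero]
    rw [MvPolynomial.X, MvPolynomial.monomial_mul, MvPolynomial.pderiv_monomial,
      gaussianExp_monomial, gaussianExp_monomial, ← Finset.mul_prod_erase _ _ (Finset.mem_univ i),
      prod_add, ← Finset.mul_prod_erase _ _ (Finset.mem_univ i), prod_sub]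
    simp only [Finsupp.add_apply, Finsupp.tsub_apply, Finsupp.single_eq_same, pow_add, pow_one,
      integral_pow_succ_gaussianReal_zero_one, integral_const_mul]
    ring
  | add p q hp hq => rw [mul_add, map_add, map_add, map_add, hp, hq]

end GaussianExp

/-! ### Hermite polynomials -/

open Polynomial in
lemma derivative_hermite_succ (k : ℕ) :
    derivative (hermite (k + 1)) = (k + 1 : ℤ[X]) * hermite k := by
  induction k with
  | zero => simp
  | succ k ih =>
    have hk := hermite_succ k
    rw [hermite_succ, derivative_sub, derivative_mul, ih, derivative_X, derivative_mul,
      derivative_add, derivative_natCast, derivative_one]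
    push_cast
    linear_combination -(k + 1 : ℤ[X]) * hk

section HermiteMv

variable {σ : Type*}

/-- The adjoint `p ↦ X i * p - ∂ᵢ p` of `∂ᵢ` for the Gaussian inner product. -/
noncomputable def creation (i : σ) (p : MvPolynomial σ ℝ) : MvPolynomial σ ℝ :=
  MvPolynomial.X i * p - MvPolynomial.pderiv i p

lemma gaussianExp_creation_mul [Fintype σ] (i : σ) (p q : MvPolynomial σ ℝ) :
    gaussianExp (creation i p * q) = gaussianExp (p * MvPolynomial.pderiv i q) := by
  rw [creation, sub_mul, mul_assoc, map_sub, gaussianExp_X_mul, MvPolynomial.pderiv_mul, map_add]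
  ring

lemma pderiv_aeval_X [DecidableEq σ] (i j : σ) (p : Polynomial ℤ) :
    MvPolynomial.pderiv i (Polynomial.aeval (MvPolynomial.X j : MvPolynomial σ ℝ) p) =
      if i = j then Polynomial.aeval (MvPolynomial.X j) (Polynomial.derivative p) else 0 := by
  have chain_rule := ((MvPolynomial.pderiv i).restrictScalars ℤ).map_aeval p
    (MvPolynomial.X j : MvPolynomial σ ℝ)
  rw [Derivation.restrictScalars_apply, Derivation.restrictScalars_apply] at chain_rule
  rw [chain_rule]
  split_ifs with hij <;> simp [MvPolynomial.pderiv_X, hij]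

lemma exists_eq_add_single_of_ne_zero [DecidableEq σ] {α : σ → ℕ} {i : σ} (hi : α i ≠ 0) :
    ∃ β : σ → ℕ, α = β + Pi.single i 1 := by
  refine ⟨α - Pi.single i 1, funext fun j => ?_⟩
  obtain rfl | hj := eq_or_ne j i
  · simpa using (Nat.sub_one_add_one hi).symm
  · simp [hj]

variable [Fintype σ]

/-- The multivariate probabilists' Hermite polynomial `∏ᵢ He_{αᵢ}(Xᵢ)`. -/
noncomputable def hermiteMv (α : σ → ℕ) : MvPolynomial σ ℝ :=
  ∏ i, Polynomial.aeval (MvPolynomial.X i) (Polynomial.hermite (α i))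

lemma hermiteMv_zero : hermiteMv (0 : σ → ℕ) = 1 := by simp [hermiteMv]

lemma hermiteMv_eq_mul_prod_erase [DecidableEq σ] (α : σ → ℕ) (i : σ) :
    hermiteMv α = Polynomial.aeval (MvPolynomial.X i) (Polynomial.hermite (α i)) *
      ∏ j ∈ Finset.univ.erase i,
        Polynomial.aeval (MvPolynomial.X j) (Polynomial.hermite (α j)) := by
  rw [hermiteMv, Finset.mul_prod_erase _ (fun j => Polynomial.aeval
    (MvPolynomial.X j : MvPolynomial σ ℝ) (Polynomial.hermite (α j))) (Finset.mem_univ i)]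

lemma hermiteMv_add_single [DecidableEq σ] (α : σ → ℕ) (i : σ) :
    hermiteMv (α + Pi.single i 1) =
      Polynomial.aeval (MvPolynomial.X i) (Polynomial.hermite (α i + 1)) *
        ∏ j ∈ Finset.univ.erase i,
          Polynomial.aeval (MvPolynomial.X j) (Polynomial.hermite (α j)) := by
  rw [hermiteMv_eq_mul_prod_erase _ i]
  congr 1
  · simp
  · exact Finset.prod_congr rfl fun j hj => by simp [Finset.ne_of_mem_erase hj]

lemma pderiv_prod_erase_hermite [DecidableEq σ] (α : σ → ℕ) (i : σ) :
    MvPolynomial.pderiv i (∏ j ∈ Finset.univ.erase i, Polynomial.aeval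
      (MvPolynomial.X j : MvPolynomial σ ℝ) (Polynomial.hermite (α j))) = 0 := by
  refine Finset.prod_induction _ (fun p => MvPolynomial.pderiv i p = 0) (fun p q hp hq => ?_)
    (by simp) fun j hj => ?_
  · rw [MvPolynomial.pderiv_mul, hp, hq, zero_mul, mul_zero, add_zero]
  · rw [pderiv_aeval_X, if_neg (Finset.ne_of_mem_erase hj).symm]

lemma creation_hermiteMv [DecidableEq σ] (i : σ) (α : σ → ℕ) :
    creation i (hermiteMv α) = hermiteMv (α + Pi.single i 1) := by
  rw [hermiteMv_add_single, hermiteMv_eq_mul_prod_erase α i, creation, MvPolynomial.pderiv_mul,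
    pderiv_prod_erase_hermite, pderiv_aeval_X, if_pos rfl, Polynomial.hermite_succ, map_sub,
    map_mul, Polynomial.aeval_X]
  ring

lemma pderiv_hermiteMv_of_eq_zero {i : σ} {α : σ → ℕ} (hα : α i = 0) :
    MvPolynomial.pderiv i (hermiteMv α) = 0 := by
  classical
  rw [hermiteMv_eq_mul_prod_erase α i, MvPolynomial.pderiv_mul, pderiv_prod_erase_hermite, hα]
  simp

lemma pderiv_hermiteMv_add_single [DecidableEq σ] (i : σ) (α : σ → ℕ) :
    MvPolynomial.pderiv i (hermiteMv (α + Pi.single i 1)) = (α i + 1 : ℝ) • hermiteMv α := by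
  rw [hermiteMv_add_single, hermiteMv_eq_mul_prod_erase α i, MvPolynomial.pderiv_mul,
    pderiv_prod_erase_hermite, pderiv_aeval_X, if_pos rfl, derivative_hermite_succ,
    MvPolynomial.smul_eq_C_mul]
  simp only [map_mul, map_add, map_natCast, map_one]
  ring

lemma creation_pderiv_hermiteMv (i : σ) (α : σ → ℕ) :
    creation i (MvPolynomial.pderiv i (hermiteMv α)) = (α i : ℝ) • hermiteMv α := by
  classical
  obtain hi | hi := eq_or_ne (α i) 0
  · simp [pderiv_hermiteMv_of_eq_zero hi, creation, hi]
  · obtain ⟨β, rfl⟩ := exists_eq_add_single_of_ne_zero hi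
    rw [pderiv_hermiteMv_add_single, ← creation_hermiteMv]
    simp [creation, smul_sub]

lemma X_mul_hermiteMv [DecidableEq σ] (i : σ) (α : σ → ℕ) :
    MvPolynomial.X i * hermiteMv α =
      hermiteMv (α + Pi.single i 1) + MvPolynomial.pderiv i (hermiteMv α) := by
  rw [← creation_hermiteMv, creation, sub_add_cancel]

lemma gaussianExp_hermiteMv_of_ne_zero {α : σ → ℕ} (hα : α ≠ 0) :
    gaussianExp (hermiteMv α) = 0 := by
  classical
  obtain ⟨i, hi⟩ := Function.ne_iff.1 hα
  obtain ⟨β, rfl⟩ := exists_eq_add_single_of_ne_zero hi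
  rw [← creation_hermiteMv, ← mul_one (creation i _), gaussianExp_creation_mul,
    MvPolynomial.pderiv_one, mul_zero, map_zero]

lemma gaussianExp_hermiteMv_mul_hermiteMv (α β : σ → ℕ) :
    gaussianExp (hermiteMv α * hermiteMv β) = if α = β then ∏ i, ((α i).factorial : ℝ) else 0 := by
  classical
  induction hk : ∑ i, α i generalizing α β with
  | zero =>
    obtain rfl : α = 0 := funext fun i => by simpa using (Finset.sum_eq_zero_iff.1 hk) i
    obtain rfl | hβ := eq_or_ne β 0
    · simp only [hermiteMv_zero, mul_one, gaussianExp_one, if_true, Pi.zero_apply,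
        Nat.factorial_zero, Nat.cast_one, Finset.prod_const_one]
    · rw [hermiteMv_zero, one_mul, gaussianExp_hermiteMv_of_ne_zero hβ, if_neg hβ.symm]
  | succ k ih =>
    obtain ⟨i, -, hi⟩ := Finset.exists_ne_zero_of_sum_ne_zero (hk.trans_ne k.succ_ne_zero)
    obtain ⟨α, rfl⟩ := exists_eq_add_single_of_ne_zero hi
    have hα : ∑ j, α j = k := by simpa [Finset.sum_add_distrib] using hk
    have prod_factorial : ∏ j, (((α + Pi.single i 1 : σ → ℕ) j).factorial : ℝ) =
        (α i + 1) * ∏ j, ((α j).factorial : ℝ) := by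
      rw [← Finset.mul_prod_erase _ _ (Finset.mem_univ i),
        ← Finset.mul_prod_erase _ (fun j => ((α j).factorial : ℝ)) (Finset.mem_univ i),
        Finset.prod_congr rfl fun j hj => by
          rw [Pi.add_apply, Pi.single_eq_of_ne (Finset.ne_of_mem_erase hj), add_zero]]
      simp [Nat.factorial_succ, mul_assoc]
    rw [← creation_hermiteMv, gaussianExp_creation_mul, prod_factorial]
    obtain hβ | hβ := eq_or_ne (β i) 0
    · have hne : α + Pi.single i 1 ≠ β := by
        rintro rfl
        simp at hβ
      rw [pderiv_hermiteMv_of_eq_zero hβ, mul_zero, map_zero, if_neg hne]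
    · obtain ⟨β, rfl⟩ := exists_eq_add_single_of_ne_zero hβ
      rw [pderiv_hermiteMv_add_single, mul_smul_comm, map_smul, ih α β hα, smul_eq_mul]
      by_cases h : α = β <;> simp [h]

end HermiteMv

/-! ### Gaussian hypercontractivity -/

section Chaos

variable {σ : Type*} [Fintype σ]

/-- The homogeneous Gaussian (Wiener) chaos of order `k`. -/
noncomputable def chaos (σ : Type*) [Fintype σ] (k : ℕ) : Submodule ℝ (MvPolynomial σ ℝ) :=
  Submodule.span ℝ (hermiteMv '' {α : σ → ℕ | ∑ i, α i = k})

lemma hermiteMv_mem_chaos (α : σ → ℕ) : hermiteMv α ∈ chaos σ (∑ i, α i) :=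
  Submodule.subset_span ⟨α, rfl, rfl⟩

lemma pderiv_mem_chaos {k : ℕ} {p : MvPolynomial σ ℝ} (hp : p ∈ chaos σ (k + 1)) (i : σ) :
    MvPolynomial.pderiv i p ∈ chaos σ k := by
  classical
  induction hp using Submodule.span_induction with
  | mem p hp =>
    obtain ⟨α, hα, rfl⟩ := hp
    obtain hi | hi := eq_or_ne (α i) 0
    · rw [pderiv_hermiteMv_of_eq_zero hi]
      exact zero_mem _
    · obtain ⟨β, rfl⟩ := exists_eq_add_single_of_ne_zero hi
      obtain rfl : ∑ j, β j = k := by simpa [Finset.sum_add_distrib] using hα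
      rw [pderiv_hermiteMv_add_single]
      exact Submodule.smul_mem _ _ (hermiteMv_mem_chaos β)
  | zero => simp
  | add p q _ _ hp hq => simpa using add_mem hp hq
  | smul a p _ hp => simpa using Submodule.smul_mem _ a hp

lemma sum_creation_pderiv {k : ℕ} {p : MvPolynomial σ ℝ} (hp : p ∈ chaos σ k) :
    ∑ i, creation i (MvPolynomial.pderiv i p) = (k : ℝ) • p := by
  induction hp using Submodule.span_induction with
  | mem p hp =>
    obtain ⟨α, rfl, rfl⟩ := hp
    simp only [creation_pderiv_hermiteMv, ← Finset.sum_smul, Nat.cast_sum]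
  | zero => simp [creation]
  | add p q _ _ hp hq =>
    rw [smul_add, ← hp, ← hq, ← Finset.sum_add_distrib]
    refine Finset.sum_congr rfl fun i _ => ?_
    simp only [creation, map_add]
    ring
  | smul a p _ hp =>
    rw [smul_comm, ← hp, Finset.smul_sum]
    refine Finset.sum_congr rfl fun i _ => ?_
    simp only [creation, Derivation.map_smul, mul_smul_comm, smul_sub]

lemma sum_gaussianExp_pderiv_mul_pderiv {k : ℕ} {p : MvPolynomial σ ℝ} (hp : p ∈ chaos σ k)
    (q : MvPolynomial σ ℝ) :
    ∑ i, gaussianExp (MvPolynomial.pderiv i p * MvPolynomial.pderiv i q) =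
      k * gaussianExp (p * q) := by
  simp only [← gaussianExp_creation_mul]
  rw [← map_sum, ← Finset.sum_mul, sum_creation_pderiv hp, smul_mul_assoc, map_smul, smul_eq_mul]

lemma gaussianExp_mul_eq_zero_of_mem_chaos {j k : ℕ} {p q : MvPolynomial σ ℝ}
    (hp : p ∈ chaos σ j) (hq : q ∈ chaos σ k) (hjk : j ≠ k) : gaussianExp (p * q) = 0 := by
  have h := sum_gaussianExp_pderiv_mul_pderiv hp q
  simp only [mul_comm (MvPolynomial.pderiv _ p)] at h
  rw [sum_gaussianExp_pderiv_mul_pderiv hq p, mul_comm q p] at h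
  exact (mul_eq_mul_right_iff.1 h).resolve_left (by exact_mod_cast hjk.symm)

lemma gaussianExp_sq_nonneg (p : MvPolynomial σ ℝ) : 0 ≤ gaussianExp (p ^ 2) :=
  gaussianExp_nonneg fun x => by simpa only [map_pow] using sq_nonneg _

lemma gaussianExp_pow_four_nonneg (p : MvPolynomial σ ℝ) : 0 ≤ gaussianExp (p ^ 4) :=
  gaussianExp_nonneg fun x => by simpa only [map_pow] using Even.pow_nonneg (by decide) _

lemma gaussianExp_sq_sum_sq_le {ι : Type*} (s : Finset ι) {c : ℝ} (hc : 0 ≤ c)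
    {p : ι → MvPolynomial σ ℝ}
    (hp : ∀ i ∈ s, gaussianExp (p i ^ 4) ≤ (c * gaussianExp (p i ^ 2)) ^ 2) :
    gaussianExp ((∑ i ∈ s, p i ^ 2) ^ 2) ≤ (c * ∑ i ∈ s, gaussianExp (p i ^ 2)) ^ 2 := by
  have term_le : ∀ i ∈ s, ∀ j ∈ s, gaussianExp (p i ^ 2 * p j ^ 2) ≤
      (c * gaussianExp (p i ^ 2)) * (c * gaussianExp (p j ^ 2)) := fun i hi j hj => by
    have hnonneg := fun l => mul_nonneg hc (gaussianExp_sq_nonneg (p l))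
    refine (pow_le_pow_iff_left₀ (gaussianExp_nonneg fun x => ?_)
      (mul_nonneg (hnonneg i) (hnonneg j)) two_ne_zero).1 ?_
    · simpa only [map_mul, map_pow] using mul_nonneg (sq_nonneg _) (sq_nonneg _)
    calc gaussianExp (p i ^ 2 * p j ^ 2) ^ 2
        ≤ gaussianExp ((p i ^ 2) ^ 2) * gaussianExp ((p j ^ 2) ^ 2) := sq_gaussianExp_mul_le _ _
      _ = gaussianExp (p i ^ 4) * gaussianExp (p j ^ 4) := by rw [← pow_mul, ← pow_mul]
      _ ≤ (c * gaussianExp (p i ^ 2)) ^ 2 * (c * gaussianExp (p j ^ 2)) ^ 2 :=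
        mul_le_mul (hp i hi) (hp j hj) (gaussianExp_pow_four_nonneg _) (sq_nonneg _)
      _ = _ := (mul_pow _ _ _).symm
  rw [sq (∑ i ∈ s, p i ^ 2), sq (c * _), Finset.sum_mul_sum, Finset.mul_sum, Finset.sum_mul_sum]
  simp only [map_sum]
  exact Finset.sum_le_sum fun i hi => Finset.sum_le_sum fun j hj => term_le i hi j hj

lemma succ_mul_gaussianExp_pow_four {k : ℕ} {p : MvPolynomial σ ℝ} (hp : p ∈ chaos σ (k + 1)) :
    (k + 1) * gaussianExp (p ^ 4) =
      3 * gaussianExp (p ^ 2 * ∑ i, MvPolynomial.pderiv i p ^ 2) := by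
  have h := sum_gaussianExp_pderiv_mul_pderiv hp (p ^ 3)
  rw [← pow_succ', Nat.cast_succ, ← map_sum] at h
  rw [← h, ← smul_eq_mul, ← map_smul, Finset.mul_sum, Finset.smul_sum]
  congr 1
  refine Finset.sum_congr rfl fun i _ => ?_
  rw [MvPolynomial.pderiv_pow, MvPolynomial.smul_eq_C_mul]
  simp only [map_ofNat]
  push_cast
  ring

/- After Stein's identity `(k + 1) 𝔼 f⁴ = 3 𝔼 f² |∇f|²` and Cauchy–Schwarz, the induction
hypothesis applies to the partial derivatives of `f`, which lie in the previous chaos. -/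
lemma gaussianExp_pow_four_le_of_mem_chaos {k : ℕ} {p : MvPolynomial σ ℝ} (hp : p ∈ chaos σ k) :
    gaussianExp (p ^ 4) ≤ (3 ^ k * gaussianExp (p ^ 2)) ^ 2 := by
  induction k generalizing p with
  | zero =>
    have hspan : p ∈ Submodule.span ℝ {(1 : MvPolynomial σ ℝ)} := by
      have hset : {α : σ → ℕ | ∑ i, α i = 0} = {0} := by
        ext α
        simp [funext_iff]
      rwa [chaos, hset, Set.image_singleton, hermiteMv_zero] at hp
    obtain ⟨a, rfl⟩ := Submodule.mem_span_singleton.1 hspan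
    simp only [smul_pow, one_pow, map_smul, gaussianExp_one, smul_eq_mul]
    exact le_of_eq (by ring)
  | succ k ih =>
    set G := ∑ i, MvPolynomial.pderiv i p ^ 2
    have energy : ∑ i, gaussianExp (MvPolynomial.pderiv i p ^ 2) =
        (k + 1) * gaussianExp (p ^ 2) := by
      simpa only [sq, Nat.cast_succ] using sum_gaussianExp_pderiv_mul_pderiv hp p
    have hGsq : gaussianExp (G ^ 2) ≤ (3 ^ k * ((k + 1) * gaussianExp (p ^ 2))) ^ 2 := by
      rw [← energy]
      exact gaussianExp_sq_sum_sq_le _ (by positivity) fun i _ => ih (pderiv_mem_chaos hp i)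
    have cauchy_schwarz := sq_gaussianExp_mul_le (p ^ 2) G
    rw [← pow_mul] at cauchy_schwarz
    have h4 := gaussianExp_pow_four_nonneg p
    obtain h0 | hpos := h4.eq_or_lt
    · exact h0 ▸ sq_nonneg _
    · refine le_of_mul_le_mul_left ?_ (by positivity : 0 < (k + 1 : ℝ) ^ 2 * gaussianExp (p ^ 4))
      calc (k + 1 : ℝ) ^ 2 * gaussianExp (p ^ 4) * gaussianExp (p ^ 4)
          = ((k + 1) * gaussianExp (p ^ 4)) ^ 2 := by ring
        _ = 9 * gaussianExp (p ^ 2 * G) ^ 2 := by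
          rw [succ_mul_gaussianExp_pow_four hp]
          ring
        _ ≤ 9 * (gaussianExp (p ^ 4) * (3 ^ k * ((k + 1) * gaussianExp (p ^ 2))) ^ 2) := by
          gcongr
          exact cauchy_schwarz.trans (mul_le_mul_of_nonneg_left hGsq h4)
        _ = _ := by ring

end Chaos

section HermiteExpansion

variable {σ : Type*} [Fintype σ] {D : ℕ} {p : MvPolynomial σ ℝ}

lemma X_mul_mem_span_hermiteMv (i : σ)
    (hp : p ∈ Submodule.span ℝ (hermiteMv '' {α : σ → ℕ | ∑ j, α j ≤ D})) :
    MvPolynomial.X i * p ∈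
      Submodule.span ℝ (hermiteMv '' {α : σ → ℕ | ∑ j, α j ≤ D + 1}) := by
  classical
  induction hp using Submodule.span_induction with
  | mem p hp =>
    obtain ⟨α, hα, rfl⟩ := hp
    rw [Set.mem_ofPred_eq] at hα
    rw [X_mul_hermiteMv]
    refine add_mem (Submodule.subset_span ⟨_, by simpa [Finset.sum_add_distrib] using hα, rfl⟩) ?_
    obtain hi | hi := eq_or_ne (α i) 0
    · simp [pderiv_hermiteMv_of_eq_zero hi]
    · obtain ⟨β, rfl⟩ := exists_eq_add_single_of_ne_zero hi
      rw [pderiv_hermiteMv_add_single]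
      refine Submodule.smul_mem _ _ (Submodule.subset_span ⟨β, ?_, rfl⟩)
      simp only [Pi.add_apply, Finset.sum_add_distrib] at hα
      exact (Nat.le_of_add_right_le hα).trans D.le_succ
  | zero => simp
  | add p q _ _ hp hq => simpa only [mul_add] using add_mem hp hq
  | smul a p _ hp => simpa only [mul_smul_comm] using Submodule.smul_mem _ a hp

lemma monomial_mem_span_hermiteMv {u : σ →₀ ℕ} (hu : u.degree ≤ D) :
    MvPolynomial.monomial u (1 : ℝ) ∈
      Submodule.span ℝ (hermiteMv '' {α : σ → ℕ | ∑ j, α j ≤ D}) := by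
  classical
  induction D generalizing u with
  | zero =>
    obtain rfl : u = 0 := (Finsupp.degree_eq_zero_iff u).1 (Nat.le_zero.1 hu)
    exact Submodule.subset_span ⟨0, by simp, hermiteMv_zero⟩
  | succ D ih =>
    obtain rfl | hu0 := eq_or_ne u 0
    · exact Submodule.subset_span ⟨0, by simp, hermiteMv_zero⟩
    obtain ⟨i, hi⟩ := Finsupp.ne_iff.1 hu0
    obtain ⟨v, rfl⟩ : ∃ v, u = Finsupp.single i 1 + v :=
      exists_add_of_le (Finsupp.single_le_iff.2 (Nat.one_le_iff_ne_zero.2 hi))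
    rw [map_add, Finsupp.degree_single, add_comm] at hu
    rw [MvPolynomial.monomial_single_add, pow_one]
    exact X_mul_mem_span_hermiteMv i (ih (Nat.le_of_succ_le_succ hu))

lemma exists_eq_sum_smul_hermiteMv [DecidableEq σ] (hp : p.totalDegree ≤ D) :
    ∃ c : (σ → ℕ) → ℝ, p = ∑ k ∈ Finset.range (D + 1),
      ∑ α ∈ Finset.piAntidiag Finset.univ k, c α • hermiteMv α := by
  have hspan : p ∈ Submodule.span ℝ (hermiteMv '' {α : σ → ℕ | ∑ j, α j ≤ D}) := by
    rw [p.as_sum]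
    refine sum_mem fun u hu => ?_
    rw [← mul_one (p.coeff u), ← smul_eq_mul, ← MvPolynomial.smul_monomial]
    exact Submodule.smul_mem _ _
      (monomial_mem_span_hermiteMv ((MvPolynomial.le_totalDegree hu).trans hp))
  have hset : {α : σ → ℕ | ∑ j, α j ≤ D} =
      ((Finset.range (D + 1)).biUnion (Finset.piAntidiag Finset.univ) : Finset (σ → ℕ)) := by
    ext α
    simp
  rw [hset, Submodule.mem_span_image_finset_iff_exists_fun'] at hspan
  obtain ⟨c, rfl⟩ := hspan
  refine ⟨c, Finset.sum_biUnion fun j _ k _ hjk => Finset.disjoint_left.2 fun α hj hk => hjk ?_⟩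
  rw [← (Finset.mem_piAntidiag.1 hj).1, (Finset.mem_piAntidiag.1 hk).1]

lemma exists_eq_sum_mem_chaos (hp : p.totalDegree ≤ D) :
    ∃ f : ℕ → MvPolynomial σ ℝ, (∀ k, f k ∈ chaos σ k) ∧
      p = ∑ k ∈ Finset.range (D + 1), f k := by
  classical
  obtain ⟨c, rfl⟩ := exists_eq_sum_smul_hermiteMv hp
  refine ⟨_, fun k => sum_mem fun α hα => Submodule.smul_mem _ _ ?_, rfl⟩
  exact (Finset.mem_piAntidiag.1 hα).1 ▸ hermiteMv_mem_chaos α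

lemma gaussianExp_sum_sq_of_mem_chaos {f : ℕ → MvPolynomial σ ℝ} (hf : ∀ k, f k ∈ chaos σ k)
    (s : Finset ℕ) : gaussianExp ((∑ k ∈ s, f k) ^ 2) = ∑ k ∈ s, gaussianExp (f k ^ 2) := by
  rw [sq, Finset.sum_mul_sum, map_sum]
  refine Finset.sum_congr rfl fun j hj => ?_
  rw [map_sum, sq]
  exact Finset.sum_eq_single_of_mem j hj fun k _ hkj =>
    gaussianExp_mul_eq_zero_of_mem_chaos (hf j) (hf k) hkj.symm

lemma gaussianExp_sum_smul_hermiteMv_sq [DecidableEq σ] (k : ℕ) (c : (σ → ℕ) → ℝ) :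
    gaussianExp ((∑ α ∈ Finset.piAntidiag Finset.univ k, c α • hermiteMv α) ^ 2) =
      ∑ α ∈ Finset.piAntidiag Finset.univ k, c α ^ 2 * ∏ i, ((α i).factorial : ℝ) := by
  rw [sq, Finset.sum_mul_sum, map_sum]
  refine Finset.sum_congr rfl fun α hα => ?_
  simp only [map_sum, smul_mul_smul_comm, map_smul, gaussianExp_hermiteMv_mul_hermiteMv,
    smul_eq_mul, mul_ite, mul_zero, Finset.sum_ite_eq, if_pos hα, sq]

theorem gaussianExp_pow_four_le (hp : p.totalDegree ≤ D) :
    gaussianExp (p ^ 4) ≤ (9 ^ D * gaussianExp (p ^ 2)) ^ 2 := by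
  obtain ⟨f, hf, rfl⟩ := exists_eq_sum_mem_chaos hp
  have term_le : ∀ k ∈ Finset.range (D + 1),
      gaussianExp (f k ^ 4) ≤ (3 ^ D * gaussianExp (f k ^ 2)) ^ 2 := fun k hk =>
    (gaussianExp_pow_four_le_of_mem_chaos (hf k)).trans <| by
      have := gaussianExp_sq_nonneg (f k)
      have : k ≤ D := Nat.lt_succ_iff.1 (Finset.mem_range.1 hk)
      gcongr
      norm_num
  have card_le : (D + 1 : ℝ) ≤ 3 ^ D := by exact_mod_cast Nat.lt_pow_self (by norm_num)
  calc gaussianExp ((∑ k ∈ Finset.range (D + 1), f k) ^ 4)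
      ≤ gaussianExp ((D + 1 : ℝ) ^ 2 • (∑ k ∈ Finset.range (D + 1), f k ^ 2) ^ 2) := by
        refine gaussianExp_mono fun x => ?_
        have h := sq_sum_le_card_mul_sum_sq (s := Finset.range (D + 1))
          (f := fun k => MvPolynomial.eval x (f k))
        simp only [map_pow, map_sum, MvPolynomial.smul_eval]
        rw [Finset.card_range, Nat.cast_succ] at h
        rw [← mul_pow, show 4 = 2 * 2 from rfl, pow_mul]
        exact pow_le_pow_left₀ (sq_nonneg _) h 2
    _ ≤ (D + 1 : ℝ) ^ 2 *
        (3 ^ D * ∑ k ∈ Finset.range (D + 1), gaussianExp (f k ^ 2)) ^ 2 := by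
        rw [map_smul, smul_eq_mul]
        gcongr
        exact gaussianExp_sq_sum_sq_le _ (by positivity) term_le
    _ ≤ (3 ^ D) ^ 2 * (3 ^ D * ∑ k ∈ Finset.range (D + 1), gaussianExp (f k ^ 2)) ^ 2 := by
        gcongr
    _ = (9 ^ D * gaussianExp ((∑ k ∈ Finset.range (D + 1), f k) ^ 2)) ^ 2 := by
        rw [gaussianExp_sum_sq_of_mem_chaos hf, show (9 : ℝ) = 3 * 3 by norm_num, mul_pow (3 : ℝ)]
        ring

end HermiteExpansion

section HermiteEval

/-- The value at `x` of the probabilists' Hermite polynomial `He_k`. -/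
noncomputable def hermiteEval (k : ℕ) (x : ℝ) : ℝ :=
  Polynomial.aeval x (Polynomial.hermite k)

lemma hermiteEval_zero (x : ℝ) : hermiteEval 0 x = 1 := by simp [hermiteEval]

lemma hermiteEval_one (x : ℝ) : hermiteEval 1 x = x := by simp [hermiteEval]

lemma hermiteEval_add_one (k : ℕ) (x : ℝ) :
    hermiteEval (k + 1) x = x * hermiteEval k x - k * hermiteEval (k - 1) x := by
  cases k with
  | zero => simp [hermiteEval]
  | succ k =>
    simp only [hermiteEval, Polynomial.hermite_succ (k + 1), derivative_hermite_succ, map_sub,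
      map_mul, map_add, map_natCast, map_one, Polynomial.aeval_X, Nat.cast_succ,
      Nat.add_sub_cancel]

lemma hermiteEval_neg (k : ℕ) (x : ℝ) : hermiteEval k (-x) = (-1) ^ k * hermiteEval k x := by
  induction k using Nat.twoStepInduction with
  | zero => simp [hermiteEval_zero]
  | one => simp [hermiteEval_one]
  | more k ih ih' =>
    rw [hermiteEval_add_one, hermiteEval_add_one (k + 1), Nat.add_sub_cancel, ih, ih']
    ring

lemma abs_hermiteEval_le (k : ℕ) {x R : ℝ} (hR : 1 ≤ R) (hx : |x| ≤ R) :
    |hermiteEval k x| ≤ k.factorial * R ^ k := by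
  induction k using Nat.twoStepInduction with
  | zero => simp [hermiteEval_zero]
  | one => simpa [hermiteEval_one] using hx
  | more k ih ih' =>
    rw [hermiteEval_add_one, Nat.add_sub_cancel]
    calc |x * hermiteEval (k + 1) x - (k + 1 : ℕ) * hermiteEval k x|
        ≤ |x| * |hermiteEval (k + 1) x| + (k + 1 : ℕ) * |hermiteEval k x| := by
          rw [← abs_mul, ← Nat.abs_cast (k + 1), ← abs_mul, Nat.abs_cast]
          exact abs_sub _ _
      _ ≤ R * ((k + 1).factorial * R ^ (k + 1)) +
          (k + 1 : ℕ) * (k.factorial * R ^ (k + 2)) := by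
          gcongr
          exact ih.trans (by gcongr; simp)
      _ = 2 * ((k + 1).factorial * R ^ (k + 2)) := by
          simp only [Nat.factorial_succ]
          push_cast
          ring
      _ ≤ (k + 2 : ℕ) * ((k + 1).factorial * R ^ (k + 2)) := by
          gcongr
          norm_num
      _ = (k + 2).factorial * R ^ (k + 2) := by
          rw [Nat.factorial_succ (k + 1), Nat.cast_mul, mul_assoc]

end HermiteEval

/-! ### Hermite moments of a Gaussian vector with one direction frozen -/

section FrozenDirection

variable {ι κ : Type*}

lemma pderiv_aeval_eq_sum [Fintype ι] (φ : ι → MvPolynomial κ ℝ) (l : κ) (p : MvPolynomial ι ℝ) :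
    MvPolynomial.pderiv l (MvPolynomial.aeval φ p) =
      ∑ m, MvPolynomial.pderiv l (φ m) * MvPolynomial.aeval φ (MvPolynomial.pderiv m p) := by
  classical
  induction p using MvPolynomial.induction_on with
  | C a => simp [MvPolynomial.algebraMap_eq]
  | add p q hp hq => simp only [map_add, hp, hq, mul_add, Finset.sum_add_distrib]
  | mul_X p i hp =>
    simp only [map_mul, MvPolynomial.pderiv_mul, MvPolynomial.aeval_X, hp, map_add, mul_add,
      Finset.sum_add_distrib, MvPolynomial.pderiv_X, Finset.sum_mul, mul_assoc]
    congr 1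
    rw [Finset.sum_eq_single_of_mem i (Finset.mem_univ i) fun m _ hm => by
      simp [Pi.single_eq_of_ne hm.symm]]
    simp [mul_comm]

variable [Fintype κ]

/-- The affine forms `x uⱼ + ∑ₗ Aₗⱼ Xₗ`. -/
noncomputable def affineForm (x : ℝ) (u : ι → ℝ) (A : κ → ι → ℝ) (j : ι) : MvPolynomial κ ℝ :=
  MvPolynomial.C (x * u j) + ∑ l, MvPolynomial.C (A l j) * MvPolynomial.X l

lemma pderiv_affineForm (x : ℝ) (u : ι → ℝ) (A : κ → ι → ℝ) (l : κ) (j : ι) :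
    MvPolynomial.pderiv l (affineForm x u A j) = MvPolynomial.C (A l j) := by
  classical
  simp [affineForm, MvPolynomial.pderiv_X, Pi.single_apply]

/-- The expectation `𝔼 p(x u + Aᵀ g)` for a standard Gaussian vector `g`. -/
noncomputable def frozenExp (x : ℝ) (u : ι → ℝ) (A : κ → ι → ℝ) : MvPolynomial ι ℝ →ₗ[ℝ] ℝ :=
  gaussianExp ∘ₗ (MvPolynomial.aeval (affineForm x u A)).toLinearMap

lemma frozenExp_apply (x : ℝ) (u : ι → ℝ) (A : κ → ι → ℝ) (p : MvPolynomial ι ℝ) :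
    frozenExp x u A p = gaussianExp (MvPolynomial.aeval (affineForm x u A) p) := rfl

variable [Fintype ι] {u : ι → ℝ} {A : κ → ι → ℝ}

lemma gaussianExp_X_mul_aeval_affineForm (x : ℝ) (l : κ) (p : MvPolynomial ι ℝ) :
    gaussianExp (MvPolynomial.X l * MvPolynomial.aeval (affineForm x u A) p) =
      ∑ m, A l m * frozenExp x u A (MvPolynomial.pderiv m p) := by
  simp only [gaussianExp_X_mul, pderiv_aeval_eq_sum, pderiv_affineForm, map_sum,
    ← MvPolynomial.smul_eq_C_mul, map_smul, smul_eq_mul, frozenExp_apply]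

lemma frozenExp_creation [DecidableEq ι] (x : ℝ)
    (hA : ∀ j m, ∑ l, A l j * A l m = (if j = m then 1 else 0) - u j * u m)
    (j : ι) (p : MvPolynomial ι ℝ) :
    frozenExp x u A (creation j p) =
      u j * (x * frozenExp x u A p - ∑ m, u m * frozenExp x u A (MvPolynomial.pderiv m p)) := by
  set T := frozenExp x u A with hT
  have hX : T (MvPolynomial.X j * p) =
      x * u j * T p + ∑ l, A l j * ∑ m, A l m * T (MvPolynomial.pderiv m p) := by
    rw [hT, frozenExp_apply, map_mul, MvPolynomial.aeval_X]
    nth_rw 1 [affineForm]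
    simp only [add_mul, Finset.sum_mul, map_add, map_sum, ← MvPolynomial.smul_eq_C_mul,
      smul_mul_assoc, map_smul, smul_eq_mul, gaussianExp_X_mul_aeval_affineForm, frozenExp_apply]
  have hcov : ∑ l, A l j * ∑ m, A l m * T (MvPolynomial.pderiv m p) =
      T (MvPolynomial.pderiv j p) - u j * ∑ m, u m * T (MvPolynomial.pderiv m p) := by
    simp only [Finset.mul_sum, ← mul_assoc]
    rw [Finset.sum_comm]
    simp only [← Finset.sum_mul, hA, sub_mul, ite_mul, one_mul, zero_mul, Finset.sum_sub_distrib,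
      Finset.sum_ite_eq, Finset.mem_univ, if_true]
  rw [creation, map_sub, hX, hcov]
  ring

theorem frozenExp_hermiteMv [DecidableEq ι] (x : ℝ)
    (hA : ∀ j m, ∑ l, A l j * A l m = (if j = m then 1 else 0) - u j * u m) (β : ι → ℕ) :
    frozenExp x u A (hermiteMv β) =
      (∏ j, u j ^ β j) * hermiteEval (∑ j, β j) x := by
  induction hk : ∑ j, β j using Nat.strong_induction_on generalizing β with | _ k ih => ?_
  obtain rfl | hβ := eq_or_ne β 0
  · obtain rfl : k = 0 := by simpa using hk.symm
    simp [hermiteMv_zero, frozenExp_apply, gaussianExp_one, hermiteEval_zero]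
  obtain ⟨j, hj⟩ := Function.ne_iff.1 hβ
  obtain ⟨α, rfl⟩ := exists_eq_add_single_of_ne_zero hj
  obtain rfl : (∑ i, α i) + 1 = k := by simpa [Finset.sum_add_distrib] using hk
  have hderiv : ∀ m, u m * frozenExp x u A (MvPolynomial.pderiv m (hermiteMv α)) =
      α m * ((∏ i, u i ^ α i) * hermiteEval (∑ i, α i - 1) x) := fun m => by
    obtain hm | hm := eq_or_ne (α m) 0
    · simp [hm, pderiv_hermiteMv_of_eq_zero hm]
    · obtain ⟨γ, rfl⟩ := exists_eq_add_single_of_ne_zero hm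
      have hγ : ∑ i, (γ + Pi.single m 1 : ι → ℕ) i = ∑ i, γ i + 1 := by
        simp [Finset.sum_add_distrib]
      rw [pderiv_hermiteMv_add_single, map_smul, hγ, ih _ (by omega) γ rfl]
      simp only [Pi.add_apply, pow_add, Finset.prod_mul_distrib, Pi.single_apply, pow_ite, pow_one,
        pow_zero, Finset.prod_ite_eq', Finset.mem_univ, if_true, smul_eq_mul, Nat.cast_add,
        Nat.cast_one, Nat.add_sub_cancel]
      ring
  rw [← creation_hermiteMv, frozenExp_creation x hA, ih _ (Nat.lt_succ_self _) α rfl]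
  simp only [hderiv, ← Finset.sum_mul, ← Nat.cast_sum]
  simp only [Pi.add_apply, pow_add, Finset.prod_mul_distrib, Pi.single_apply, pow_ite, pow_one,
    pow_zero, Finset.prod_ite_eq', Finset.mem_univ, if_true]
  rw [hermiteEval_add_one]
  ring

end FrozenDirection

/-! ### Overlap of two random unit vectors -/

section RandomSigns

variable {ι : Type*} [Fintype ι] [DecidableEq ι]

lemma sum_exp_sum_sign_mul_le (y : ι → ℝ) :
    ∑ g : ι → ℤˣ, Real.exp (∑ k, g k * y k) ≤
      2 ^ Fintype.card ι * Real.exp ((∑ k, y k ^ 2) / 2) := by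
  calc ∑ g : ι → ℤˣ, Real.exp (∑ k, g k * y k) = ∏ k, ∑ s : ℤˣ, Real.exp (s * y k) := by
        simp only [Real.exp_sum, Finset.prod_univ_sum, Fintype.piFinset_univ]
    _ = ∏ k, (2 * Real.cosh (y k)) := Finset.prod_congr rfl fun k _ => by
        rw [UnitsInt.univ, Finset.sum_pair (by decide), Real.cosh_eq]
        push_cast
        ring_nf
    _ ≤ ∏ k, (2 * Real.exp (y k ^ 2 / 2)) := Finset.prod_le_prod
        (fun k _ => by positivity) fun k _ => by gcongr; exact Real.cosh_le_exp_half_sq _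
    _ = 2 ^ Fintype.card ι * Real.exp ((∑ k, y k ^ 2) / 2) := by
        simp [Finset.prod_mul_distrib, Finset.sum_div, Real.exp_sum]

lemma pow_le_factorial_mul_exp_add_exp_neg {p : ℕ} (hp : Even p) (y : ℝ) :
    y ^ p ≤ p.factorial * (Real.exp y + Real.exp (-y)) := by
  have h := Real.pow_div_factorial_le_exp |y| (abs_nonneg y) p
  rw [div_le_iff₀' (by positivity), hp.pow_abs] at h
  refine h.trans (by gcongr; exact Real.exp_abs_le y)

/-- Khintchine's inequality for even moments, with a crude constant. -/
lemma sum_pow_sum_sign_mul_le {p : ℕ} (hp : Even p) {y : ι → ℝ} (hy : ∑ k, y k ^ 2 = 1) :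
    ∑ g : ι → ℤˣ, (∑ k, g k * y k) ^ p ≤ 2 ^ Fintype.card ι * (4 * (p : ℝ) ^ p) := by
  have hexp := sum_exp_sum_sign_mul_le y
  have hexp_neg := sum_exp_sum_sign_mul_le fun k => -y k
  simp only [mul_neg, Finset.sum_neg_distrib, neg_sq, hy] at hexp hexp_neg
  have exp_half_le_two : Real.exp (1 / 2) ≤ 2 := by
    have hsq : Real.exp (1 / 2) ^ 2 = Real.exp 1 := by rw [← Real.exp_nat_mul]; norm_num
    nlinarith [Real.exp_one_lt_d9, Real.exp_pos (1 / 2)]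
  have hf : (p.factorial : ℝ) ≤ (p : ℝ) ^ p := by exact_mod_cast Nat.factorial_le_pow p
  calc ∑ g : ι → ℤˣ, (∑ k, g k * y k) ^ p
      ≤ ∑ g : ι → ℤˣ, p.factorial * (Real.exp (∑ k, g k * y k) + Real.exp (-∑ k, g k * y k)) :=
        Finset.sum_le_sum fun g _ => pow_le_factorial_mul_exp_add_exp_neg hp _
    _ = p.factorial * (∑ g : ι → ℤˣ, Real.exp (∑ k, g k * y k) +
          ∑ g : ι → ℤˣ, Real.exp (-∑ k, g k * y k)) := by
        rw [← Finset.mul_sum, Finset.sum_add_distrib]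
    _ ≤ (p : ℝ) ^ p * (2 ^ Fintype.card ι * 2 + 2 ^ Fintype.card ι * 2) := by
        gcongr
        · exact hexp.trans (by gcongr)
        · exact hexp_neg.trans (by gcongr)
    _ = _ := by ring

end RandomSigns

lemma exists_orthogonal_matrix_row_eq {ι : Type*} [Fintype ι] [DecidableEq ι] (i₀ : ι)
    {a : ι → ℝ} (ha : ∑ j, a j ^ 2 = 1) : ∃ R : Matrix ι ι ℝ, Rᵀ * R = 1 ∧ R i₀ = a := by
  let v : ι → EuclideanSpace ℝ ι := fun _ => WithLp.toLp 2 a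
  have hv : Orthonormal ℝ (({i₀} : Set ι).domRestrict v) := by
    refine ⟨fun i => ?_, fun i j hij => absurd (Subsingleton.elim i j) hij⟩
    rw [Set.domRestrict_apply, EuclideanSpace.norm_eq]
    simp [v, ha]
  obtain ⟨b, hb⟩ := hv.exists_orthonormalBasis_extension_of_card_eq (by simp)
  refine ⟨Matrix.of fun i k => b i k, mul_eq_one_comm.1 ?_, ?_⟩
  · ext i j
    rw [Matrix.mul_apply, Matrix.one_apply, ← (orthonormal_iff_ite.1 b.orthonormal) i j,
      PiLp.inner_apply]
    exact Finset.sum_congr rfl fun k _ => by simp [mul_comm]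
  · ext k
    simp [hb i₀ rfl, v]

lemma sum_sq_mulVec_of_orthogonal {ι : Type*} [Fintype ι] [DecidableEq ι] {Q : Matrix ι ι ℝ}
    (hQ : Qᵀ * Q = 1) (w : ι → ℝ) : ∑ k, (Q *ᵥ w) k ^ 2 = ∑ k, w k ^ 2 := by
  have sum_sq_eq : ∀ z : ι → ℝ, ∑ k, z k ^ 2 = z ⬝ᵥ z := fun z => by simp [dotProduct, sq]
  rw [sum_sq_eq, sum_sq_eq, Matrix.dotProduct_mulVec, ← Matrix.mulVec_transpose,
    Matrix.mulVec_mulVec, hQ, Matrix.one_mulVec]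

lemma sum_sq_row_of_orthogonal {ι : Type*} [Fintype ι] [DecidableEq ι] {Q : Matrix ι ι ℝ}
    (hQ : Qᵀ * Q = 1) (i : ι) : ∑ j, Q i j ^ 2 = 1 := by
  have h := congrFun₂ (mul_eq_one_comm.1 hQ : Q * Qᵀ = 1) i i
  rw [Matrix.mul_apply, Matrix.one_apply_eq] at h
  simpa only [transpose_apply, ← sq] using h

/-- The law of a uniformly random orthogonal matrix, characterised by invariance under
left multiplication by orthogonal matrices. -/
structure IsOrthogonalHaar {ι : Type*} [Fintype ι] [DecidableEq ι]
    (μ : Measure (ι → ι → ℝ)) : Prop where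
  ae_orthogonal : ∀ᵐ Q ∂μ, (Matrix.of Q)ᵀ * Matrix.of Q = 1
  map_mul_left : ∀ R : Matrix ι ι ℝ, Rᵀ * R = 1 →
    Measure.map (fun Q => fun i j => (R * Matrix.of Q) i j) μ = μ

namespace IsOrthogonalHaar

variable {ι : Type*} [Fintype ι] [DecidableEq ι] {μ : Measure (ι → ι → ℝ)}

lemma measurePreserving_mul_left (hμ : IsOrthogonalHaar μ) {R : Matrix ι ι ℝ} (hR : Rᵀ * R = 1) :
    MeasurePreserving (fun Q i j => (R * Matrix.of Q) i j) μ μ := by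
  refine ⟨measurable_pi_iff.2 fun i => measurable_pi_iff.2 fun j => ?_, hμ.map_mul_left R hR⟩
  simp only [Matrix.mul_apply, of_apply]
  fun_prop

/-- By invariance any row may be replaced by the combination of all rows with unit coefficient
vector `g / √n`. -/
lemma integral_row_pow_eq (hμ : IsOrthogonalHaar μ) (i₀ : ι) (p : ℕ) (w : ι → ℝ) (g : ι → ℤˣ) :
    ∫ Q, (∑ j, Q i₀ j * w j) ^ p ∂μ =
      (∫ Q, (∑ k, g k * (Matrix.of Q *ᵥ w) k) ^ p ∂μ) / √(Fintype.card ι) ^ p := by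
  have hcard : (0 : ℝ) < Fintype.card ι := by exact_mod_cast Fintype.card_pos_iff.2 ⟨i₀⟩
  have hg : ∑ k, ((g k : ℝ) / √(Fintype.card ι)) ^ 2 = 1 := by
    have : ∀ k, (g k : ℝ) ^ 2 = 1 := fun k => by
      rcases Int.units_eq_one_or (g k) with h | h <;> simp [h]
    simp [div_pow, this, Real.sq_sqrt hcard.le, hcard.ne']
  obtain ⟨R, hR, hR_row⟩ := exists_orthogonal_matrix_row_eq i₀ hg
  have hinv := hμ.measurePreserving_mul_left hR
  conv_lhs => rw [← hinv.map_eq]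
  have hm : Measurable fun Q : ι → ι → ℝ => (∑ j, Q i₀ j * w j) ^ p := by fun_prop
  rw [integral_map hinv.measurable.aemeasurable hm.aestronglyMeasurable, ← integral_div]
  congr 1 with Q
  rw [← div_pow]
  congr 1
  calc ∑ j, (R * Matrix.of Q) i₀ j * w j = (R *ᵥ (Matrix.of Q *ᵥ w)) i₀ := by
        rw [Matrix.mulVec_mulVec]; rfl
    _ = _ := by simp [Matrix.mulVec, dotProduct, hR_row, Finset.sum_div, div_mul_eq_mul_div]

variable [IsProbabilityMeasure μ]

lemma hasAllMoments_entry (hμ : IsOrthogonalHaar μ) (i j : ι) :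
    HasAllMoments (fun Q => Q i j) μ := by
  have hm : Measurable fun Q : ι → ι → ℝ => Q i j := by fun_prop
  refine HasAllMoments.of_bound hm.aestronglyMeasurable 1 ?_
  filter_upwards [hμ.ae_orthogonal] with Q hQ
  rw [Real.norm_eq_abs, ← sq_le_one_iff_abs_le_one]
  calc Q i j ^ 2 ≤ ∑ k, Q i k ^ 2 :=
        Finset.single_le_sum (f := fun k => Q i k ^ 2) (fun k _ => sq_nonneg _)
          (Finset.mem_univ j)
    _ = 1 := sum_sq_row_of_orthogonal hQ i

lemma integrable_eval (hμ : IsOrthogonalHaar μ) (p : MvPolynomial (ι × ι) ℝ) :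
    Integrable (fun Q : ι → ι → ℝ => MvPolynomial.eval (fun ij => Q ij.1 ij.2) p) μ :=
  HasAllMoments.integrable (HasAllMoments.mvPolynomial_eval
    (fun ij : ι × ι => hμ.hasAllMoments_entry ij.1 ij.2) p)

lemma integral_row_pow_le (hμ : IsOrthogonalHaar μ) (i₀ : ι) {p : ℕ} (hp : Even p) {w : ι → ℝ}
    (hw : ∑ j, w j ^ 2 = 1) :
    ∫ Q, (∑ j, Q i₀ j * w j) ^ p ∂μ ≤ 4 * (p / √(Fintype.card ι)) ^ p := by
  have hcard : (0 : ℝ) < Fintype.card ι := by exact_mod_cast Fintype.card_pos_iff.2 ⟨i₀⟩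
  have hInt : ∀ g : ι → ℤˣ, Integrable (fun Q => (∑ k, g k * (Matrix.of Q *ᵥ w) k) ^ p) μ :=
    fun g => by
      convert! hμ.integrable_eval ((∑ k, MvPolynomial.C (g k : ℝ) *
        ∑ j, MvPolynomial.X (k, j) * MvPolynomial.C (w j)) ^ p) with Q
      simp [Matrix.mulVec, dotProduct]
  have hsum : ∫ Q, ∑ g : ι → ℤˣ, (∑ k, g k * (Matrix.of Q *ᵥ w) k) ^ p ∂μ ≤
      2 ^ Fintype.card ι * (4 * (p : ℝ) ^ p) := by
    refine (integral_mono_ae (integrable_finsetSum _ fun g _ => hInt g)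
      (integrable_const (2 ^ Fintype.card ι * (4 * (p : ℝ) ^ p))) ?_).trans_eq (by simp)
    filter_upwards [hμ.ae_orthogonal] with Q hQ
    exact sum_pow_sum_sign_mul_le hp ((sum_sq_mulVec_of_orthogonal hQ w).trans hw)
  rw [integral_finsetSum _ fun g _ => hInt g] at hsum
  have hpow : (0 : ℝ) < √(Fintype.card ι) ^ p := by positivity
  simp only [fun g => (eq_div_iff hpow.ne').1 (hμ.integral_row_pow_eq i₀ p w g) |>.symm,
    Finset.sum_const, Finset.card_univ, Fintype.card_fun, Fintype.card_units_int, nsmul_eq_mul,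
    Nat.cast_pow, Nat.cast_ofNat] at hsum
  rw [div_pow, ← mul_div_assoc, le_div_iff₀ hpow]
  exact le_of_mul_le_mul_left hsum (by positivity)

theorem integral_overlap_pow_le (hμ : IsOrthogonalHaar μ) (i₀ : ι) {p : ℕ} (hp : Even p) :
    ∫ q, (∑ j, q.1 i₀ j * q.2 i₀ j) ^ p ∂(μ.prod μ) ≤ 4 * (p / √(Fintype.card ι)) ^ p := by
  have hInt : Integrable (fun q : (ι → ι → ℝ) × (ι → ι → ℝ) =>
      (∑ j, q.1 i₀ j * q.2 i₀ j) ^ p) (μ.prod μ) := by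
    have hrows := HasAllMoments.mvPolynomial_eval (μ := μ.prod μ)
      (F := fun q : (ι → ι → ℝ) × (ι → ι → ℝ) => Sum.elim (q.1 i₀) (q.2 i₀)) (by
        rintro (j | j)
        · exact (hμ.hasAllMoments_entry i₀ j).comp_measurePreserving measurePreserving_fst
        · exact (hμ.hasAllMoments_entry i₀ j).comp_measurePreserving measurePreserving_snd)
      ((∑ j, MvPolynomial.X (Sum.inl j) * MvPolynomial.X (Sum.inr j)) ^ p)
    simpa using hrows.integrable
  rw [integral_prod_symm _ hInt]
  refine (integral_mono_ae hInt.integral_prod_right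
    (integrable_const (4 * ((p : ℝ) / √(Fintype.card ι)) ^ p)) ?_).trans_eq (by simp)
  filter_upwards [hμ.ae_orthogonal] with Q hQ
  exact hμ.integral_row_pow_le i₀ hp (sum_sq_row_of_orthogonal hQ i₀)

end IsOrthogonalHaar

/-! ### The Bernoulli–Rademacher distribution -/

/-- The `k`-th Hermite moment `𝔼 He_k(s x)` of a law `π` rescaled by `s`. -/
noncomputable def hermiteMoment (π : Measure ℝ) (s : ℝ) (k : ℕ) : ℝ :=
  ∫ x, hermiteEval k (s * x) ∂π

section BernoulliRademacher

variable {N : ℕ} {ρ : ℝ}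

lemma isProbabilityMeasure_brMeasure (N : ℕ) (h0 : 0 ≤ ρ) (h1 : ρ ≤ 1) :
    IsProbabilityMeasure (brMeasure N ρ) := by
  have hweights : (1 - ρ).toNNReal + (ρ / 2).toNNReal + (ρ / 2).toNNReal = 1 := by
    rw [← Real.toNNReal_add (by linarith) (by linarith),
      ← Real.toNNReal_add (by linarith) (by linarith), show 1 - ρ + ρ / 2 + ρ / 2 = 1 by ring,
      Real.toNNReal_one]
  constructor
  simp only [brMeasure, Measure.add_apply, Measure.smul_apply, measure_univ, ENNReal.smul_def,
    smul_eq_mul, mul_one, ← ENNReal.coe_add, hweights, ENNReal.coe_one]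

lemma hasAllMoments_id_brMeasure (N : ℕ) (ρ : ℝ) :
    HasAllMoments (fun x : ℝ => x) (brMeasure N ρ) := by
  refine HasAllMoments.of_bound aestronglyMeasurable_id (√(N * ρ))⁻¹ ?_
  have ae_smul_dirac : ∀ (c : NNReal) (a : ℝ), |a| ≤ (√(N * ρ))⁻¹ →
      ∀ᵐ x ∂(c • Measure.dirac a : Measure ℝ), ‖x‖ ≤ (√(N * ρ))⁻¹ := fun c a h =>
    Measure.ae_smul_measure
      ((ae_dirac_iff (measurableSet_le measurable_norm measurable_const)).2 h) c
  have h0 : 0 ≤ (√(N * ρ))⁻¹ := by positivity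
  rw [brMeasure, ae_add_measure_iff, ae_add_measure_iff]
  exact ⟨⟨ae_smul_dirac _ _ (by rwa [abs_zero]), ae_smul_dirac _ _ (by rw [abs_of_nonneg h0])⟩,
    ae_smul_dirac _ _ (by rw [abs_neg, abs_of_nonneg h0])⟩

lemma integral_brMeasure (N : ℕ) (h0 : 0 ≤ ρ) (h1 : ρ ≤ 1) (f : ℝ → ℝ) :
    ∫ x, f x ∂(brMeasure N ρ) = (1 - ρ) * f 0 + ρ / 2 * f (√(N * ρ))⁻¹ +
      ρ / 2 * f (-(√(N * ρ))⁻¹) := by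
  have hInt : ∀ (c : NNReal) (a : ℝ), Integrable f (c • Measure.dirac a) := fun c a =>
    (integrable_dirac (by simp)).smul_measure_nnreal
  rw [brMeasure, integral_add_measure ((hInt _ _).add_measure (hInt _ _)) (hInt _ _),
    integral_add_measure (hInt _ _) (hInt _ _), integral_smul_nnreal_measure,
    integral_smul_nnreal_measure, integral_smul_nnreal_measure]
  simp only [integral_dirac, NNReal.smul_def, smul_eq_mul]
  rw [Real.coe_toNNReal _ (by linarith), Real.coe_toNNReal _ (by linarith)]

lemma hermiteMoment_brMeasure (hN : 0 < N) (h0 : 0 ≤ ρ) (h1 : ρ ≤ 1) (k : ℕ) :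
    hermiteMoment (brMeasure N ρ) √N k = (1 - ρ) * hermiteEval k 0 +
      ρ / 2 * hermiteEval k (√ρ)⁻¹ + ρ / 2 * hermiteEval k (-(√ρ)⁻¹) := by
  have hN' : (√N : ℝ) ≠ 0 := (Real.sqrt_pos.2 (by exact_mod_cast hN)).ne'
  have hatom : √N * (√(N * ρ))⁻¹ = (√ρ)⁻¹ := by
    rw [Real.sqrt_mul (by positivity), mul_inv, ← mul_assoc, mul_inv_cancel₀ hN', one_mul]
  rw [hermiteMoment, integral_brMeasure N h0 h1, mul_neg, hatom, mul_zero]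

lemma hermiteMoment_brMeasure_zero (h0 : 0 ≤ ρ) (h1 : ρ ≤ 1) :
    hermiteMoment (brMeasure N ρ) √N 0 = 1 := by
  have := isProbabilityMeasure_brMeasure N h0 h1
  simp [hermiteMoment, hermiteEval_zero]

lemma hermiteMoment_brMeasure_of_odd (hN : 0 < N) (h0 : 0 ≤ ρ) (h1 : ρ ≤ 1) {k : ℕ}
    (hk : Odd k) : hermiteMoment (brMeasure N ρ) √N k = 0 := by
  have hodd : hermiteEval k 0 = -hermiteEval k 0 := by
    simpa [hk.neg_one_pow] using hermiteEval_neg k 0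
  rw [hermiteMoment_brMeasure hN h0 h1, hermiteEval_neg, hk.neg_one_pow]
  linear_combination (1 - ρ) / 2 * hodd

/-- `He₂ = X² - 1`, and a Bernoulli–Rademacher variable has the variance of the Gaussian. -/
lemma hermiteMoment_brMeasure_two (hN : 0 < N) (h0 : 0 < ρ) (h1 : ρ ≤ 1) :
    hermiteMoment (brMeasure N ρ) √N 2 = 0 := by
  have hs : (√ρ)⁻¹ ^ 2 = ρ⁻¹ := by rw [inv_pow, Real.sq_sqrt h0.le]
  rw [hermiteMoment_brMeasure hN h0.le h1]
  simp only [hermiteEval_add_one 1, hermiteEval_one, Nat.sub_self, hermiteEval_zero, Nat.cast_one]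
  linear_combination ρ * hs + mul_inv_cancel₀ h0.ne'

lemma abs_hermiteMoment_brMeasure_le (hN : 0 < N) (h0 : 0 < ρ) (h1 : ρ ≤ 1) {k : ℕ}
    (hk : 2 ≤ k) :
    |hermiteMoment (brMeasure N ρ) √N k| ≤ 2 * k.factorial * (ρ * (√ρ)⁻¹ ^ k) := by
  set T : ℝ := (√ρ)⁻¹ with hT
  have hsρ : 0 < √ρ := Real.sqrt_pos.2 h0
  have hT0 : 0 < T := inv_pos.2 hsρ
  have hT1 : 1 ≤ T := one_le_inv_iff₀.2 ⟨hsρ, Real.sqrt_le_one.2 h1⟩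
  have one_le_mul_pow : 1 ≤ ρ * T ^ k := by
    obtain ⟨m, rfl⟩ := Nat.exists_eq_add_of_le hk
    rw [pow_add, hT, inv_pow _ 2, Real.sq_sqrt h0.le, ← mul_assoc, mul_inv_cancel₀ h0.ne', one_mul]
    exact one_le_pow₀ hT1
  have h_zero : |hermiteEval k 0| ≤ k.factorial := by
    simpa using abs_hermiteEval_le k (le_refl (1 : ℝ)) (x := 0) (by simp)
  have h_pos : |hermiteEval k T| ≤ k.factorial * T ^ k :=
    abs_hermiteEval_le k hT1 (by rw [abs_of_pos hT0])
  have h_neg : |hermiteEval k (-T)| ≤ k.factorial * T ^ k :=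
    abs_hermiteEval_le k hT1 (by rw [abs_neg, abs_of_pos hT0])
  rw [hermiteMoment_brMeasure hN h0.le h1, ← hT]
  calc _ ≤ |(1 - ρ) * hermiteEval k 0| + |ρ / 2 * hermiteEval k T| +
        |ρ / 2 * hermiteEval k (-T)| := abs_add_three _ _ _
    _ = (1 - ρ) * |hermiteEval k 0| + ρ / 2 * |hermiteEval k T| +
        ρ / 2 * |hermiteEval k (-T)| := by
      rw [abs_mul, abs_mul, abs_mul, abs_of_nonneg (by linarith : 0 ≤ 1 - ρ),
        abs_of_nonneg (by linarith : 0 ≤ ρ / 2)]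
    _ ≤ 1 * k.factorial + ρ / 2 * (k.factorial * T ^ k) + ρ / 2 * (k.factorial * T ^ k) := by
      gcongr
      linarith
    _ = k.factorial * 1 + k.factorial * (ρ * T ^ k) := by ring
    _ ≤ k.factorial * (ρ * T ^ k) + k.factorial * (ρ * T ^ k) := by gcongr
    _ = _ := by ring

lemma sq_hermiteMoment_brMeasure_div_factorial_le (hN : 0 < N) (h0 : 0 < ρ) (h1 : ρ ≤ 1)
    {k : ℕ} (hk : 2 ≤ k) :
    hermiteMoment (brMeasure N ρ) √N k ^ 2 / k.factorial ≤
      4 * ρ ^ 2 * (k.factorial * ρ⁻¹ ^ k) := by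
  rw [div_le_iff₀ (by positivity)]
  calc hermiteMoment (brMeasure N ρ) √N k ^ 2
      ≤ (2 * k.factorial * (ρ * (√ρ)⁻¹ ^ k)) ^ 2 :=
        sq_le_sq' (by linarith [(abs_le.1 (abs_hermiteMoment_brMeasure_le hN h0 h1 hk)).1])
          (abs_le.1 (abs_hermiteMoment_brMeasure_le hN h0 h1 hk)).2
    _ = 4 * ρ ^ 2 * (k.factorial * ((√ρ)⁻¹ ^ 2) ^ k) * k.factorial := by ring
    _ = _ := by rw [inv_pow _ 2, Real.sq_sqrt h0.le]

/-- Terms of order `k ≥ 4` are geometric in `D² / (ρ √n)`, and the fourth power of this ratio is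
`D⁸ / (n² ρ⁴)`. -/
lemma hermiteMoment_brMeasure_mul_pow_le {n D k : ℕ} (hn : 0 < n) (hnN : n ≤ N) (h0 : 0 < ρ)
    (h1 : ρ ≤ 1) (hk : 4 ≤ k) (hkD : k ≤ D) (h : 4 * (D : ℝ) ^ 9 * N ≤ (n * ρ) ^ 2) :
    hermiteMoment (brMeasure N ρ) √N k ^ 2 / k.factorial * (D / √n) ^ k ≤ 1 / (D * N) := by
  have hn' : (0 : ℝ) < n := by exact_mod_cast hn
  have hN' : (0 : ℝ) < N := by exact_mod_cast hn.trans_le hnN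
  have hD' : (1 : ℝ) ≤ D := by exact_mod_cast (by omega : 1 ≤ D)
  set x : ℝ := D * (D / √n) * ρ⁻¹ with hx
  have hx4 : x ^ 4 = (D : ℝ) ^ 8 / (n ^ 2 * ρ ^ 4) := by
    have h4 : (√n : ℝ) ^ 4 = n ^ 2 := by
      rw [show (√n : ℝ) ^ 4 = (√n ^ 2) ^ 2 by ring, Real.sq_sqrt hn'.le]
    rw [hx, mul_pow, mul_pow, div_pow, h4, inv_pow]
    field_simp
  have hx1 : x ≤ 1 := by
    have hDn : (D : ℝ) ^ 4 ≤ n * ρ ^ 2 := le_of_mul_le_mul_right (a := (n : ℝ)) (by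
      calc (D : ℝ) ^ 4 * n ≤ (D : ℝ) ^ 9 * N := by gcongr; norm_num
        _ ≤ 4 * (D : ℝ) ^ 9 * N := by linarith [show 0 ≤ (D : ℝ) ^ 9 * N by positivity]
        _ ≤ n * ρ ^ 2 * n := h.trans_eq (by ring)) hn'
    rw [← pow_le_one_iff_of_nonneg (by positivity) (by norm_num : (4 : ℕ) ≠ 0), hx4,
      div_le_one (by positivity)]
    calc (D : ℝ) ^ 8 = ((D : ℝ) ^ 4) ^ 2 := by ring
      _ ≤ (n * ρ ^ 2) ^ 2 := by gcongr
      _ = _ := by ring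
  have hf : (k.factorial : ℝ) ≤ (D : ℝ) ^ k := by
    exact_mod_cast (Nat.factorial_le_pow k).trans (Nat.pow_le_pow_left hkD k)
  calc hermiteMoment (brMeasure N ρ) √N k ^ 2 / k.factorial * (D / √n) ^ k
      ≤ 4 * ρ ^ 2 * ((D : ℝ) ^ k * ρ⁻¹ ^ k) * (D / √n) ^ k := by
        gcongr
        refine (sq_hermiteMoment_brMeasure_div_factorial_le (hn.trans_le hnN) h0 h1
          (by omega)).trans ?_
        gcongr
    _ = 4 * ρ ^ 2 * x ^ k := by rw [hx]; ring
    _ ≤ 4 * ρ ^ 2 * x ^ 4 := by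
        gcongr 4 * ρ ^ 2 * ?_
        exact pow_le_pow_of_le_one (by positivity) hx1 hk
    _ = 4 * (D : ℝ) ^ 8 / (n * ρ) ^ 2 := by rw [hx4]; field_simp
    _ ≤ 1 / (D * N) := by
        rw [div_le_div_iff₀ (by positivity) (by positivity)]
        linarith

lemma sum_hermiteMoment_brMeasure_mul_pow_le {n D : ℕ} (hn : 0 < n) (hnN : n ≤ N) (h0 : 0 < ρ)
    (h1 : ρ ≤ 1) (hD : 1 ≤ D) (h : 4 * (D : ℝ) ^ 9 * N ≤ (n * ρ) ^ 2) :
    ∑ k ∈ Finset.range (D + 1),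
      hermiteMoment (brMeasure N ρ) √N k ^ 2 / k.factorial * (D / √n) ^ k ≤ 1 + 1 / N := by
  have hN : 0 < N := hn.trans_le hnN
  have hterm : ∀ k ∈ Finset.range D, hermiteMoment (brMeasure N ρ) √N (k + 1) ^ 2 /
      (k + 1).factorial * (D / √n) ^ (k + 1) ≤ 1 / (D * N) := fun k hk => by
    rcases Nat.even_or_odd (k + 1) with heven | hodd
    · obtain h2 | h4 : k + 1 = 2 ∨ 4 ≤ k + 1 := by grind
      · rw [h2, hermiteMoment_brMeasure_two hN h0 h1, zero_pow two_ne_zero, zero_div, zero_mul]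
        positivity
      · exact hermiteMoment_brMeasure_mul_pow_le hn hnN h0 h1 h4 (Finset.mem_range.1 hk) h
    · rw [hermiteMoment_brMeasure_of_odd hN h0.le h1 hodd, zero_pow two_ne_zero, zero_div,
        zero_mul]
      positivity
  rw [Finset.sum_range_succ', hermiteMoment_brMeasure_zero h0.le h1, add_comm]
  have hsum := Finset.sum_le_sum hterm
  rw [Finset.sum_const, Finset.card_range, nsmul_eq_mul,
    show (D : ℝ) * (1 / (D * N)) = 1 / N by field_simp] at hsum
  simpa using hsum

end BernoulliRademacher

/-! ### The low-degree likelihood ratio -/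

section LowDegree

variable {Ω σ : Type*} [MeasurableSpace Ω] [Fintype σ] [DecidableEq σ]

/-- The squared norm of the degree-`D` part of the likelihood ratio of the law of `F` under `ν`
with respect to the standard Gaussian law. It is computed from Hermite coefficients, so that no
absolute continuity is needed. -/
noncomputable def lowDegreeNormSq (F : Ω → σ → ℝ) (ν : Measure Ω) (D : ℕ) : ℝ :=
  ∑ k ∈ Finset.range (D + 1), ∑ α ∈ Finset.piAntidiag Finset.univ k,
    (∫ ω, MvPolynomial.eval (F ω) (hermiteMv α) ∂ν) ^ 2 / ∏ i, ((α i).factorial : ℝ)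

theorem sq_integral_eval_le_lowDegreeNormSq_mul {ν : Measure Ω} [IsFiniteMeasure ν]
    {F : Ω → σ → ℝ} (hF : ∀ i, HasAllMoments (fun ω => F ω i) ν) {p : MvPolynomial σ ℝ} {D : ℕ}
    (hp : p.totalDegree ≤ D) :
    (∫ ω, MvPolynomial.eval (F ω) p ∂ν) ^ 2 ≤ lowDegreeNormSq F ν D * gaussianExp (p ^ 2) := by
  obtain ⟨c, rfl⟩ := exists_eq_sum_smul_hermiteMv hp
  have hInt : ∀ α, Integrable (fun ω => MvPolynomial.eval (F ω) (c α • hermiteMv α)) ν :=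
    fun α => (HasAllMoments.mvPolynomial_eval hF _).integrable
  rw [gaussianExp_sum_sq_of_mem_chaos fun k => sum_mem fun α hα => Submodule.smul_mem _ _
    ((Finset.mem_piAntidiag.1 hα).1 ▸ hermiteMv_mem_chaos α)]
  have integral_sum : ∫ ω, MvPolynomial.eval (F ω) (∑ k ∈ Finset.range (D + 1),
        ∑ α ∈ Finset.piAntidiag Finset.univ k, c α • hermiteMv α) ∂ν =
      ∑ k ∈ Finset.range (D + 1), ∑ α ∈ Finset.piAntidiag Finset.univ k,
        c α * ∫ ω, MvPolynomial.eval (F ω) (hermiteMv α) ∂ν := by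
    simp only [map_sum]
    rw [integral_finsetSum _ fun k _ => integrable_finsetSum _ fun α _ => hInt α]
    simp only [integral_finsetSum _ fun α _ => hInt α]
    simp only [MvPolynomial.smul_eval, integral_const_mul]
  rw [integral_sum]
  simp only [gaussianExp_sum_smul_hermiteMv_sq, lowDegreeNormSq, Finset.sum_sigma']
  refine Finset.sum_sq_le_sum_mul_sum_of_sq_le_mul _ (fun _ _ => by positivity)
    (fun _ _ => by positivity) fun x _ => le_of_eq ?_
  have hfact : ∏ i, ((x.2 i).factorial : ℝ) ≠ 0 := by positivity
  field_simp

end LowDegree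

lemma eval_hermiteMv {σ : Type*} [Fintype σ] (x : σ → ℝ) (α : σ → ℕ) :
    MvPolynomial.eval x (hermiteMv α) = ∏ i, hermiteEval (α i) (x i) := by
  rw [hermiteMv, map_prod]
  refine Finset.prod_congr rfl fun i _ => ?_
  rw [hermiteEval, Polynomial.aeval_def, Polynomial.hom_eval₂, MvPolynomial.eval_X,
    Polynomial.aeval_def]
  congr 1
  exact Subsingleton.elim _ _

lemma measurePreserving_sqrt_mul_gaussianReal {N : ℕ} (hN : 0 < N) :
    MeasurePreserving (fun x => √N * x) (gaussianReal 0 (N : NNReal)⁻¹) (gaussianReal 0 1) := by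
  refine ⟨by fun_prop, ?_⟩
  rw [gaussianReal_map_const_mul, mul_zero]
  congr 1
  ext
  have hN' : (N : ℝ) ≠ 0 := by exact_mod_cast hN.ne'
  simp [hN']

section Planted

variable {N n : ℕ}

/-- The planted distribution, with `v` having independent entries of law `π` and `Q` having law
`μQ`, on the space of triples `(v, Q, B)` where `B` holds the columns other than `v`. -/
noncomputable abbrev plantedLaw (N n : ℕ) (π : Measure ℝ) (μQ : Measure (Fin n → Fin n → ℝ)) :
    Measure ((Fin N → ℝ) × (Fin n → Fin n → ℝ) × (Fin N → Fin (n - 1) → ℝ)) :=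
  (Measure.pi fun _ => π).prod (μQ.prod (iidGaussVec N (n - 1) (N : NNReal)⁻¹))

/-- The entries of the planted matrix `√N Y Q`, normalised to unit variance. -/
noncomputable def plantedEntry (w : (Fin N → ℝ) × (Fin n → Fin n → ℝ) × (Fin N → Fin (n - 1) → ℝ))
    (ij : Fin N × Fin n) : ℝ :=
  √N * (gaussBasis w.1 w.2.2 * Matrix.of w.2.1) ij.1 ij.2

instance (N k : ℕ) (σ2 : NNReal) : IsProbabilityMeasure (iidGaussVec N k σ2) := by
  unfold iidGaussVec
  infer_instance

lemma integral_prod_hermiteEval_row (hN : 0 < N) {κ : Type*} [Fintype κ] [DecidableEq κ] {k : ℕ}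
    (x : ℝ) {u : κ → ℝ} {A : Fin k → κ → ℝ}
    (hA : ∀ j m, ∑ l, A l j * A l m = (if j = m then 1 else 0) - u j * u m) (β : κ → ℕ) :
    ∫ b, ∏ j, hermiteEval (β j) (√N * (x * u j + ∑ l, b l * A l j))
        ∂(gaussVec k (N : NNReal)⁻¹) =
      (∏ j, u j ^ β j) * hermiteEval (∑ j, β j) (√N * x) := by
  have hscale : MeasurePreserving (fun (b : Fin k → ℝ) l => √N * b l)
      (gaussVec k (N : NNReal)⁻¹) (stdGaussianPi (Fin k)) :=
    measurePreserving_pi _ _ fun _ => measurePreserving_sqrt_mul_gaussianReal hN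
  rw [← frozenExp_hermiteMv (√N * x) hA, frozenExp_apply, gaussianExp_apply, ← hscale.map_eq,
    integral_map hscale.measurable.aemeasurable
      (hscale.map_eq ▸ (hasAllMoments_eval_stdGaussianPi _).memLp_two.aestronglyMeasurable)]
  congr 1 with b
  rw [MvPolynomial.aeval_def, MvPolynomial.algebraMap_eq, ← MvPolynomial.eval_assoc,
    eval_hermiteMv]
  refine Finset.prod_congr rfl fun j _ => ?_
  simp only [Function.comp_apply, affineForm, map_add, map_sum, map_mul, MvPolynomial.eval_C,
    MvPolynomial.eval_X, mul_add, Finset.mul_sum]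
  congr 2
  · ring
  · exact Finset.sum_congr rfl fun l _ => by ring

lemma integral_eval_hermiteMv_plantedEntry_gaussian [NeZero n] (hN : 0 < N)
    (v : Fin N → ℝ) {Q : Fin n → Fin n → ℝ} (hQ : (Matrix.of Q)ᵀ * Matrix.of Q = 1)
    (α : Fin N × Fin n → ℕ) :
    ∫ B, MvPolynomial.eval (plantedEntry (v, Q, B)) (hermiteMv α)
        ∂(iidGaussVec N (n - 1) (N : NNReal)⁻¹) =
      (∏ i, ∏ j, Q 0 j ^ α (i, j)) * ∏ i, hermiteEval (∑ j, α (i, j)) (√N * v i) := by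
  obtain ⟨n, rfl⟩ := Nat.exists_eq_succ_of_ne_zero (NeZero.ne n)
  have hA : ∀ j m, ∑ l : Fin n, Q l.succ j * Q l.succ m =
      (if j = m then 1 else 0) - Q 0 j * Q 0 m := fun j m => by
    have := congrFun₂ hQ j m
    rw [Matrix.mul_apply, Fin.sum_univ_succ, Matrix.one_apply] at this
    exact eq_sub_of_add_eq' this
  have hentry : ∀ (B : Fin N → Fin n → ℝ) i j, plantedEntry (n := n + 1) (v, Q, B) (i, j) =
      √N * (v i * Q 0 j + ∑ l, B i l * Q l.succ j) := fun B i j => by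
    rw [plantedEntry, Matrix.mul_apply, Fin.sum_univ_succ]
    rfl
  simp only [eval_hermiteMv, Fintype.prod_prod_type]
  rw [← Finset.prod_mul_distrib]
  refine Eq.trans ?_ ((integral_fintype_prod_eq_prod (μ := fun _ => gaussVec n (N : NNReal)⁻¹)
    fun (i : Fin N) (b : Fin n → ℝ) => ∏ j, hermiteEval (α (i, j))
      (√N * (v i * Q 0 j + ∑ l, b l * Q l.succ j))).trans (Finset.prod_congr rfl fun i _ =>
        integral_prod_hermiteEval_row hN (v i) hA fun j => α (i, j)))
  simp only [← hentry]
  rfl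

variable {π : Measure ℝ} [IsProbabilityMeasure π] {μQ : Measure (Fin n → Fin n → ℝ)}
  [IsProbabilityMeasure μQ]

lemma hasAllMoments_plantedEntry (hπ : HasAllMoments (fun x => x) π) (hμQ : IsOrthogonalHaar μQ)
    (ij : Fin N × Fin n) :
    HasAllMoments (fun w => plantedEntry w ij) (plantedLaw N n π μQ) := by
  obtain ⟨i, j⟩ := ij
  have hfirst : ∀ k, HasAllMoments
      (fun w : (Fin N → ℝ) × (Fin n → Fin n → ℝ) × (Fin N → Fin (n - 1) → ℝ) =>
        rowCat (w.1 i) (w.2.2 i) k) (plantedLaw N n π μQ) := fun k => by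
    by_cases hk : (k : ℕ) = 0
    · simpa only [rowCat, hk, dif_pos] using
        (hπ.pi_eval i).comp_measurePreserving measurePreserving_fst
    · simp only [rowCat, hk, dif_neg, not_false_eq_true]
      exact ((((hasAllMoments_id_gaussianReal 0 _).pi_eval _).pi_eval i).comp_measurePreserving
        measurePreserving_snd).comp_measurePreserving measurePreserving_snd
  have hQ : ∀ k, HasAllMoments
      (fun w : (Fin N → ℝ) × (Fin n → Fin n → ℝ) × (Fin N → Fin (n - 1) → ℝ) => w.2.1 k j)
      (plantedLaw N n π μQ) := fun k =>
    ((hμQ.hasAllMoments_entry k j).comp_measurePreserving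
      measurePreserving_fst).comp_measurePreserving measurePreserving_snd
  have hpoly := HasAllMoments.mvPolynomial_eval
    (F := fun w : (Fin N → ℝ) × (Fin n → Fin n → ℝ) × (Fin N → Fin (n - 1) → ℝ) =>
      Sum.elim (rowCat (w.1 i) (w.2.2 i)) fun k => w.2.1 k j)
    (fun k => k.casesOn hfirst hQ)
    (MvPolynomial.C √N * ∑ k, MvPolynomial.X (Sum.inl k) * MvPolynomial.X (Sum.inr k))
  simpa [plantedEntry, Matrix.mul_apply, gaussBasis] using hpoly

theorem integral_eval_hermiteMv_plantedEntry [NeZero n] (hN : 0 < N)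
    (hπ : HasAllMoments (fun x => x) π) (hμQ : IsOrthogonalHaar μQ) (α : Fin N × Fin n → ℕ) :
    ∫ w, MvPolynomial.eval (plantedEntry w) (hermiteMv α) ∂(plantedLaw N n π μQ) =
      (∫ Q, ∏ i, ∏ j, Q 0 j ^ α (i, j) ∂μQ) * ∏ i, hermiteMoment π √N (∑ j, α (i, j)) := by
  have hInt : Integrable (fun w => MvPolynomial.eval (plantedEntry w) (hermiteMv α))
      (plantedLaw N n π μQ) :=
    (HasAllMoments.mvPolynomial_eval (hasAllMoments_plantedEntry hπ hμQ) _).integrable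
  have integral_given_v : ∀ᵐ v ∂(Measure.pi fun _ : Fin N => π),
      ∫ w : (Fin n → Fin n → ℝ) × (Fin N → Fin (n - 1) → ℝ),
        MvPolynomial.eval (plantedEntry (v, w)) (hermiteMv α)
        ∂(μQ.prod (iidGaussVec N (n - 1) (N : NNReal)⁻¹)) =
      (∫ Q, ∏ i, ∏ j, Q 0 j ^ α (i, j) ∂μQ) *
        ∏ i, hermiteEval (∑ j, α (i, j)) (√N * v i) := by
    filter_upwards [hInt.prod_right_ae] with v hv
    rw [integral_prod _ hv, ← integral_mul_const]
    refine integral_congr_ae ?_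
    filter_upwards [hμQ.ae_orthogonal] with Q hQ
    exact integral_eval_hermiteMv_plantedEntry_gaussian hN v hQ α
  rw [integral_prod _ hInt, integral_congr_ae integral_given_v, integral_const_mul]
  congr 1
  exact integral_fintype_prod_eq_prod fun (i : Fin N) x => hermiteEval (∑ j, α (i, j)) (√N * x)

end Planted

/-! ### The replica bound -/

section Multinomial

lemma sum_piAntidiag_prod_pow_div {ι : Type*} [Fintype ι] [DecidableEq ι] (z : ι → ℝ) (k : ℕ) :
    ∑ a ∈ Finset.piAntidiag Finset.univ k, ∏ j, z j ^ a j / (a j).factorial =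
      (∑ j, z j) ^ k / k.factorial := by
  rw [Finset.sum_pow_eq_sum_piAntidiag, Finset.sum_div]
  refine Finset.sum_congr rfl fun a ha => ?_
  have hspec : (∏ j, ((a j).factorial : ℝ)) * Nat.multinomial Finset.univ a = k.factorial := by
    rw [← (Finset.mem_piAntidiag.1 ha).1]
    exact_mod_cast Nat.multinomial_spec Finset.univ a
  have hprod : ∏ j, ((a j).factorial : ℝ) ≠ 0 := by positivity
  rw [Finset.prod_div_distrib, div_eq_div_iff hprod (by positivity), ← hspec]
  ring

variable {ι κ : Type*} [Fintype ι] [Fintype κ] [DecidableEq ι] [DecidableEq κ]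

lemma sum_piAntidiag_prod_rows (a : ℕ → ℝ) (z : κ → ℝ) (k : ℕ) :
    ∑ α ∈ Finset.piAntidiag Finset.univ k,
        ∏ i : ι, (a (∑ j, α (i, j)) * ∏ j, z j ^ α (i, j) / (α (i, j)).factorial) =
      (∑ r ∈ Finset.piAntidiag Finset.univ k, ∏ i : ι, a (r i) / (r i).factorial) *
        (∑ j, z j) ^ k := by
  have sum_row : ∀ m, ∑ b ∈ Finset.piAntidiag Finset.univ m,
      a (∑ j, b j) * ∏ j, z j ^ b j / (b j).factorial = a m / m.factorial * (∑ j, z j) ^ m :=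
    fun m => by
      rw [Finset.sum_congr rfl fun b hb => by rw [(Finset.mem_piAntidiag.1 hb).1],
        ← Finset.mul_sum, sum_piAntidiag_prod_pow_div, div_mul_eq_mul_div, mul_div_assoc]
  have sum_rows : ∀ r ∈ Finset.piAntidiag (Finset.univ : Finset ι) k,
      (∏ i, a (r i) / (r i).factorial) * (∑ j, z j) ^ k =
        ∑ β ∈ Fintype.piFinset fun i => Finset.piAntidiag Finset.univ (r i),
          ∏ i, (a (∑ j, β i j) * ∏ j, z j ^ β i j / (β i j).factorial) := fun r hr => by
    rw [← Finset.prod_univ_sum (fun i => Finset.piAntidiag Finset.univ (r i))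
      (fun _ b => a (∑ j, b j) * ∏ j, z j ^ b j / (b j).factorial)]
    simp only [sum_row, Finset.prod_mul_distrib, Finset.prod_pow_eq_pow_sum,
      (Finset.mem_piAntidiag.1 hr).1]
  rw [Finset.sum_mul, Finset.sum_congr rfl sum_rows, Finset.sum_sigma']
  refine Finset.sum_nbij' (fun α => ⟨fun i => ∑ j, α (i, j), fun i j => α (i, j)⟩)
    (fun x ij => x.2 ij.1 ij.2) ?_ ?_ (fun _ _ => rfl) ?_ (fun _ _ => rfl)
  · simp [Finset.mem_piAntidiag, Fintype.sum_prod_type]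
  · simp +contextual [Finset.mem_piAntidiag, Fintype.sum_prod_type]
  · rintro ⟨r, β⟩ h
    obtain rfl : (fun i => ∑ j, β i j) = r := funext fun i =>
      (Finset.mem_piAntidiag.1 (Fintype.mem_piFinset.1 (Finset.mem_sigma.1 h).2 i)).1
    rfl

lemma sum_range_sum_piAntidiag_prod_le {f : ℕ → ℝ} (hf : ∀ k, 0 ≤ f k) (D : ℕ) :
    ∑ k ∈ Finset.range (D + 1), ∑ r ∈ Finset.piAntidiag Finset.univ k, ∏ i : ι, f (r i) ≤
      (∑ k ∈ Finset.range (D + 1), f k) ^ Fintype.card ι := by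
  rw [← Finset.card_univ, ← Finset.prod_const, Finset.prod_univ_sum, ← Finset.sum_biUnion
    fun j _ k _ hjk => Finset.disjoint_left.2 fun r hj hk =>
      hjk ((Finset.mem_piAntidiag.1 hj).1.symm.trans (Finset.mem_piAntidiag.1 hk).1)]
  refine Finset.sum_le_sum_of_subset_of_nonneg (fun r hr => ?_)
    fun r _ _ => Finset.prod_nonneg fun i _ => hf _
  obtain ⟨k, hk, hr⟩ := Finset.mem_biUnion.1 hr
  refine Fintype.mem_piFinset.2 fun i => Finset.mem_range.2 ?_
  calc r i ≤ ∑ i, r i := Finset.single_le_sum (fun _ _ => Nat.zero_le _) (Finset.mem_univ i)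
    _ = k := (Finset.mem_piAntidiag.1 hr).1
    _ < D + 1 := Finset.mem_range.1 hk

end Multinomial

section Replica

variable {N n : ℕ} [NeZero n] {μQ : Measure (Fin n → Fin n → ℝ)} [IsProbabilityMeasure μQ]

/-- The square of an expectation is an expectation over two independent replicas. -/
theorem lowDegreeNormSq_plantedEntry (hN : 0 < N) {π : Measure ℝ} [IsProbabilityMeasure π]
    (hπ : HasAllMoments (fun x => x) π) (hμQ : IsOrthogonalHaar μQ) (D : ℕ) :
    lowDegreeNormSq plantedEntry (plantedLaw N n π μQ) D =
      ∑ k ∈ Finset.range (D + 1),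
        (∑ r ∈ Finset.piAntidiag Finset.univ k,
          ∏ i : Fin N, hermiteMoment π √N (r i) ^ 2 / (r i).factorial) *
        ∫ q, (∑ j, q.1 0 j * q.2 0 j) ^ k ∂(μQ.prod μQ) := by
  have hoverlap : ∀ j, HasAllMoments (fun q : (Fin n → Fin n → ℝ) × (Fin n → Fin n → ℝ) =>
      q.1 0 j * q.2 0 j) (μQ.prod μQ) := fun j =>
    ((hμQ.hasAllMoments_entry 0 j).comp_measurePreserving measurePreserving_fst).mul
      ((hμQ.hasAllMoments_entry 0 j).comp_measurePreserving measurePreserving_snd)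
  have sq_coeff : ∀ α : Fin N × Fin n → ℕ,
      (∫ w, MvPolynomial.eval (plantedEntry w) (hermiteMv α) ∂(plantedLaw N n π μQ)) ^ 2 /
        ∏ ij, ((α ij).factorial : ℝ) =
      ∫ q, ∏ i, (hermiteMoment π √N (∑ j, α (i, j)) ^ 2 *
        ∏ j, (q.1 0 j * q.2 0 j) ^ α (i, j) / (α (i, j)).factorial) ∂(μQ.prod μQ) := fun α => by
    rw [integral_eval_hermiteMv_plantedEntry hN hπ hμQ, mul_pow, sq (∫ Q, _ ∂μQ),
      ← integral_prod_mul, ← integral_mul_const, ← integral_div]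
    congr 1 with q
    simp only [Finset.prod_mul_distrib, Finset.prod_div_distrib, mul_pow, Finset.prod_pow,
      Fintype.prod_prod_type]
    ring
  have hInt : ∀ α : Fin N × Fin n → ℕ,
      Integrable (fun q : (Fin n → Fin n → ℝ) × (Fin n → Fin n → ℝ) =>
        ∏ i, (hermiteMoment π √N (∑ j, α (i, j)) ^ 2 *
          ∏ j, (q.1 0 j * q.2 0 j) ^ α (i, j) / (α (i, j)).factorial)) (μQ.prod μQ) := fun α => by
    have hpoly := HasAllMoments.mvPolynomial_eval hoverlap
      (∏ i, (MvPolynomial.C (hermiteMoment π √N (∑ j, α (i, j)) ^ 2) *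
        ∏ j, MvPolynomial.X j ^ α (i, j) * MvPolynomial.C ((α (i, j)).factorial : ℝ)⁻¹))
    simpa [div_eq_mul_inv] using hpoly.integrable
  refine Finset.sum_congr rfl fun k _ => ?_
  simp only [sq_coeff]
  rw [← integral_finsetSum _ fun α _ => hInt α, ← integral_const_mul]
  congr 1 with q
  exact sum_piAntidiag_prod_rows (fun k => hermiteMoment π √N k ^ 2) _ k

variable {ρ : ℝ}

lemma lowDegreeNormSq_brMeasure_le (hN : 0 < N) (h0 : 0 < ρ) (h1 : ρ ≤ 1)
    (hμQ : IsOrthogonalHaar μQ) (D : ℕ) :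
    lowDegreeNormSq plantedEntry (plantedLaw N n (brMeasure N ρ) μQ) D ≤
      4 * (∑ k ∈ Finset.range (D + 1),
        hermiteMoment (brMeasure N ρ) √N k ^ 2 / k.factorial * (D / √n) ^ k) ^ N := by
  have := isProbabilityMeasure_brMeasure N h0.le h1
  set m := hermiteMoment (brMeasure N ρ) √N
  have hterm : ∀ k ∈ Finset.range (D + 1), ∀ r ∈ Finset.piAntidiag Finset.univ k,
      (∏ i : Fin N, m (r i) ^ 2 / (r i).factorial) *
        ∫ q, (∑ j, q.1 0 j * q.2 0 j) ^ k ∂(μQ.prod μQ) ≤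
      4 * ∏ i, (m (r i) ^ 2 / (r i).factorial * (D / √n) ^ r i) := fun k hk r hr => by
    by_cases heven : ∀ i, Even (r i)
    · have hkD : (k : ℝ) ≤ D := by exact_mod_cast Finset.mem_range_succ_iff.1 hk
      obtain rfl := (Finset.mem_piAntidiag.1 hr).1
      have hoverlap := hμQ.integral_overlap_pow_le 0
        (Finset.even_sum (s := Finset.univ) r fun i _ => heven i)
      rw [Fintype.card_fin] at hoverlap
      rw [Finset.prod_mul_distrib, Finset.prod_pow_eq_pow_sum, mul_left_comm]
      gcongr
      exact hoverlap.trans (by gcongr)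
    · obtain ⟨i, hi⟩ := not_forall.1 heven
      have hmi : m (r i) = 0 :=
        hermiteMoment_brMeasure_of_odd hN h0.le h1 (Nat.not_even_iff_odd.1 hi)
      rw [Finset.prod_eq_zero (Finset.mem_univ i) (by simp [hmi]), zero_mul]
      positivity
  rw [lowDegreeNormSq_plantedEntry hN (hasAllMoments_id_brMeasure N ρ) hμQ]
  simp only [Finset.sum_mul]
  refine (Finset.sum_le_sum fun k hk => Finset.sum_le_sum (hterm k hk)).trans ?_
  simp only [← Finset.mul_sum]
  gcongr
  simpa using sum_range_sum_piAntidiag_prod_le (ι := Fin N)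
    (f := fun k => m k ^ 2 / k.factorial * (D / √n) ^ k) (fun k => by positivity) D

theorem lowDegreeNormSq_brMeasure_le_twelve (hnN : n ≤ N) (h0 : 0 < ρ) (h1 : ρ ≤ 1)
    (hμQ : IsOrthogonalHaar μQ) {D : ℕ} (hD : 1 ≤ D) (h : 4 * (D : ℝ) ^ 9 * N ≤ (n * ρ) ^ 2) :
    lowDegreeNormSq plantedEntry (plantedLaw N n (brMeasure N ρ) μQ) D ≤ 12 := by
  have hn := NeZero.pos n
  have hN : 0 < N := hn.trans_le hnN
  have hN' : (N : ℝ) ≠ 0 := by exact_mod_cast hN.ne'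
  calc lowDegreeNormSq plantedEntry (plantedLaw N n (brMeasure N ρ) μQ) D
      ≤ 4 * (∑ k ∈ Finset.range (D + 1),
          hermiteMoment (brMeasure N ρ) √N k ^ 2 / k.factorial * (D / √n) ^ k) ^ N :=
        lowDegreeNormSq_brMeasure_le hN h0 h1 hμQ D
    _ ≤ 4 * (1 + 1 / N) ^ N := by
        gcongr
        exact sum_hermiteMoment_brMeasure_mul_pow_le hn hnN h0 h1 hD h
    _ ≤ 4 * Real.exp (1 / N) ^ N := by
        gcongr
        linarith [Real.add_one_le_exp (1 / (N : ℝ))]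
    _ = 4 * Real.exp 1 := by rw [← Real.exp_nat_mul, mul_one_div_cancel hN']
    _ ≤ 12 := by linarith [Real.exp_one_lt_d9]

end Replica

/-! ### Spectral norms of matrix polynomials -/

section SpecNorm

variable {m k : ℕ}

lemma specNorm_nonneg (A : Matrix (Fin m) (Fin k) ℝ) : 0 ≤ specNorm A := norm_nonneg _

open scoped Matrix.Norms.L2Operator in
lemma continuous_specNorm : Continuous (specNorm : Matrix (Fin m) (Fin k) ℝ → ℝ) :=
  continuous_norm (E := Matrix (Fin m) (Fin k) ℝ)

open scoped Matrix.Norms.L2Operator in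
lemma specNorm_pow_two_pow {A : Matrix (Fin m) (Fin m) ℝ} (hA : A.IsSymm) (q : ℕ) :
    specNorm (A ^ 2 ^ q) = specNorm A ^ 2 ^ q :=
  IsSelfAdjoint.norm_pow_two_pow
    ((conjTranspose_eq_transpose_of_trivial A).trans hA : IsSelfAdjoint A) q

lemma specNorm_sq_le_sum_sq (A : Matrix (Fin m) (Fin k) ℝ) :
    specNorm A ^ 2 ≤ ∑ a, ∑ b, A a b ^ 2 := by
  have hsum : 0 ≤ ∑ a, ∑ b, A a b ^ 2 := by positivity
  rw [← Real.le_sqrt (specNorm_nonneg A) hsum]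
  refine ContinuousLinearMap.opNorm_le_bound _ (Real.sqrt_nonneg _) fun x => ?_
  rw [EuclideanSpace.norm_eq, EuclideanSpace.norm_eq, ← Real.sqrt_mul hsum]
  simp only [Real.norm_eq_abs, sq_abs]
  rw [Finset.sum_mul]
  exact Real.sqrt_le_sqrt (Finset.sum_le_sum fun a _ =>
    Finset.sum_mul_sq_le_sq_mul_sq Finset.univ (fun b => A a b) fun b => x b)

lemma sum_sq_le_mul_specNorm_sq (A : Matrix (Fin m) (Fin k) ℝ) :
    ∑ a, ∑ b, A a b ^ 2 ≤ k * specNorm A ^ 2 := by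
  have sum_column_sq_le : ∀ b, ∑ a, A a b ^ 2 ≤ specNorm A ^ 2 := fun b => by
    have hle := (LinearMap.toContinuousLinearMap (Matrix.toEuclideanLin A)).le_opNorm
      (EuclideanSpace.single b (1 : ℝ))
    rw [PiLp.norm_single, norm_one, mul_one] at hle
    calc ∑ a, A a b ^ 2 = ‖LinearMap.toContinuousLinearMap (Matrix.toEuclideanLin A)
          (EuclideanSpace.single b (1 : ℝ))‖ ^ 2 := by
          rw [EuclideanSpace.norm_sq_eq]
          simp
      _ ≤ specNorm A ^ 2 := by
          gcongr
          exact hle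
  rw [Finset.sum_comm]
  simpa using Finset.sum_le_sum fun b (_ : b ∈ Finset.univ) => sum_column_sq_le b

end SpecNorm

section MatrixPolynomial

variable {σ : Type*} {m : ℕ}

lemma totalDegree_matrix_pow_le {A : Matrix (Fin m) (Fin m) (MvPolynomial σ ℝ)} {d : ℕ}
    (hA : ∀ a b, (A a b).totalDegree ≤ d) (K : ℕ) (a b : Fin m) :
    ((A ^ K) a b).totalDegree ≤ K * d := by
  induction K generalizing a b with
  | zero =>
    rw [pow_zero, Matrix.one_apply]
    split_ifs <;> simp
  | succ K ih =>
    rw [pow_succ, Matrix.mul_apply, add_mul, one_mul]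
    exact MvPolynomial.totalDegree_finsetSum_le fun c _ =>
      (MvPolynomial.totalDegree_mul _ _).trans (add_le_add (ih a c) (hA c b))

/-- The squared Frobenius norm of `A ^ K` as a polynomial; for `K` a power of two it is a
polynomial proxy for the `2K`-th power of the spectral norm of a symmetric `A`. -/
noncomputable def frobeniusSqPow (A : Matrix (Fin m) (Fin m) (MvPolynomial σ ℝ)) (K : ℕ) :
    MvPolynomial σ ℝ :=
  ∑ a, ∑ b, (A ^ K) a b ^ 2

lemma totalDegree_frobeniusSqPow_le {A : Matrix (Fin m) (Fin m) (MvPolynomial σ ℝ)} {d : ℕ}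
    (hA : ∀ a b, (A a b).totalDegree ≤ d) (K : ℕ) :
    (frobeniusSqPow A K).totalDegree ≤ 2 * (K * d) :=
  MvPolynomial.totalDegree_finsetSum_le fun a _ => MvPolynomial.totalDegree_finsetSum_le
    fun b _ => (MvPolynomial.totalDegree_pow _ _).trans
      (Nat.mul_le_mul_left 2 (totalDegree_matrix_pow_le hA K a b))

lemma eval_frobeniusSqPow (A : Matrix (Fin m) (Fin m) (MvPolynomial σ ℝ)) (K : ℕ) (x : σ → ℝ) :
    MvPolynomial.eval x (frobeniusSqPow A K) =
      ∑ a, ∑ b, ((MvPolynomial.eval x).mapMatrix A ^ K) a b ^ 2 := by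
  rw [← map_pow]
  simp [frobeniusSqPow]

lemma eval_frobeniusSqPow_nonneg (A : Matrix (Fin m) (Fin m) (MvPolynomial σ ℝ)) (K : ℕ)
    (x : σ → ℝ) : 0 ≤ MvPolynomial.eval x (frobeniusSqPow A K) := by
  rw [eval_frobeniusSqPow]
  positivity

variable {A : Matrix (Fin m) (Fin m) (MvPolynomial σ ℝ)}

lemma specNorm_eval_pow_two_pow_sq (hA : A.IsSymm) (q : ℕ) (x : σ → ℝ) :
    specNorm ((MvPolynomial.eval x).mapMatrix A ^ 2 ^ q) ^ 2 =
      specNorm ((MvPolynomial.eval x).mapMatrix A) ^ (2 * 2 ^ q) := by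
  have hsymm : ((MvPolynomial.eval x).mapMatrix A).IsSymm := hA.map _
  rw [specNorm_pow_two_pow hsymm, ← pow_mul, mul_comm]

lemma specNorm_pow_le_eval_frobeniusSqPow (hA : A.IsSymm) (q : ℕ) (x : σ → ℝ) :
    specNorm ((MvPolynomial.eval x).mapMatrix A) ^ (2 * 2 ^ q) ≤
      MvPolynomial.eval x (frobeniusSqPow A (2 ^ q)) := by
  rw [eval_frobeniusSqPow, ← specNorm_eval_pow_two_pow_sq hA]
  exact specNorm_sq_le_sum_sq _

lemma eval_frobeniusSqPow_le_mul_specNorm_pow (hA : A.IsSymm) (q : ℕ) (x : σ → ℝ) :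
    MvPolynomial.eval x (frobeniusSqPow A (2 ^ q)) ≤
      m * specNorm ((MvPolynomial.eval x).mapMatrix A) ^ (2 * 2 ^ q) := by
  rw [eval_frobeniusSqPow, ← specNorm_eval_pow_two_pow_sq hA]
  exact sum_sq_le_mul_specNorm_sq _

lemma continuous_specNorm_eval (A : Matrix (Fin m) (Fin m) (MvPolynomial σ ℝ)) :
    Continuous fun x => specNorm ((MvPolynomial.eval x).mapMatrix A) :=
  continuous_specNorm.comp (continuous_matrix fun a b => (A a b).continuous_eval)

end MatrixPolynomial

/-! ### From tail probabilities to moments -/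

lemma integral_sq_le_of_integral_pow_four_le {Ω : Type*} [MeasurableSpace Ω] {ν : Measure Ω}
    [IsProbabilityMeasure ν] {f : Ω → ℝ} (hf : MemLp (fun ω => f ω ^ 2) 2 ν) {E : Set Ω}
    (hE : MeasurableSet E) {b B : ℝ} (hfb : ∀ ω ∉ E, |f ω| ≤ b)
    (hB : ∫ ω, f ω ^ 4 ∂ν ≤ (B * ∫ ω, f ω ^ 2 ∂ν) ^ 2) (hBE : B ^ 2 * ν.real E ≤ 1 / 4) :
    ∫ ω, f ω ^ 2 ∂ν ≤ 2 * b ^ 2 := by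
  have hf2 : Integrable (fun ω => f ω ^ 2) ν := hf.integrable (by norm_num)
  have hind : MemLp (E.indicator fun _ => (1 : ℝ)) 2 ν := memLp_indicator_const 2 hE 1 (by simp)
  have hmul : ∀ ω, f ω ^ 2 * E.indicator (fun _ => (1 : ℝ)) ω =
      E.indicator (fun ω => f ω ^ 2) ω := fun ω => by
    by_cases h : ω ∈ E <;> simp [h]
  have hind_sq : ∫ ω, E.indicator (fun _ => (1 : ℝ)) ω ^ 2 ∂ν = ν.real E := by
    rw [← integral_indicator_one hE]
    congr 1 with ω
    by_cases h : ω ∈ E <;> simp [h]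
  have integral_on : ∫ ω in E, f ω ^ 2 ∂ν ≤ (∫ ω, f ω ^ 2 ∂ν) / 2 := by
    have hcs := sq_integral_mul_le_integral_sq_mul_integral_sq hf hind
    simp only [hmul, integral_indicator hE, hind_sq, ← pow_mul] at hcs
    refine (abs_le_of_sq_le_sq' (hcs.trans ?_) (by positivity)).2
    calc (∫ ω, f ω ^ (2 * 2) ∂ν) * ν.real E ≤ (B * ∫ ω, f ω ^ 2 ∂ν) ^ 2 * ν.real E := by gcongr
      _ = B ^ 2 * ν.real E * (∫ ω, f ω ^ 2 ∂ν) ^ 2 := by ring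
      _ ≤ 1 / 4 * (∫ ω, f ω ^ 2 ∂ν) ^ 2 := by gcongr
      _ = ((∫ ω, f ω ^ 2 ∂ν) / 2) ^ 2 := by ring
  have integral_off : ∫ ω in Eᶜ, f ω ^ 2 ∂ν ≤ b ^ 2 := by
    calc ∫ ω in Eᶜ, f ω ^ 2 ∂ν ≤ ∫ _ in Eᶜ, b ^ 2 ∂ν :=
          setIntegral_mono_on hf2.integrableOn (integrable_const _) hE.compl fun ω hω =>
            sq_le_sq' (abs_le.1 (hfb ω hω)).1 (abs_le.1 (hfb ω hω)).2
      _ = ν.real Eᶜ * b ^ 2 := by simp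
      _ ≤ b ^ 2 := mul_le_of_le_one_left (sq_nonneg b) measureReal_le_one
  linarith [integral_add_compl hE hf2]

section Distinguisher

variable {Ω σ : Type*} [MeasurableSpace Ω] {m d q : ℕ}
  {A : Matrix (Fin m) (Fin m) (MvPolynomial σ ℝ)}

lemma gaussianExp_frobeniusSqPow_sq_le [Fintype σ] (hA : A.IsSymm)
    (hdeg : ∀ a b, (A a b).totalDegree ≤ d) {t : ℝ}
    (htail : (9 ^ (2 * (2 ^ q * d))) ^ 2 * (stdGaussianPi σ).real
      {x | t ≤ specNorm ((MvPolynomial.eval x).mapMatrix A)} ≤ 1 / 4) :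
    gaussianExp (frobeniusSqPow A (2 ^ q) ^ 2) ≤ 2 * (m * t ^ (2 * 2 ^ q)) ^ 2 := by
  have hhyper := gaussianExp_pow_four_le (totalDegree_frobeniusSqPow_le hdeg (2 ^ q))
  have hmem := (hasAllMoments_eval_stdGaussianPi (frobeniusSqPow A (2 ^ q) ^ 2)).memLp_two
  simp only [gaussianExp_apply, map_pow] at hhyper hmem ⊢
  refine integral_sq_le_of_integral_pow_four_le hmem
    ((isClosed_le continuous_const (continuous_specNorm_eval A)).measurableSet)
    (fun x hx => ?_) hhyper htail
  rw [abs_of_nonneg (eval_frobeniusSqPow_nonneg A _ x)]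
  refine (eval_frobeniusSqPow_le_mul_specNorm_pow hA q x).trans ?_
  gcongr
  · exact specNorm_nonneg _
  · exact (not_le.1 hx).le

lemma pow_mul_measureReal_le_integral_frobeniusSqPow {ν : Measure Ω} [IsFiniteMeasure ν]
    {F : Ω → σ → ℝ} (hF : ∀ i, HasAllMoments (fun ω => F ω i) ν) (hA : A.IsSymm) {s : ℝ}
    (hs : 0 ≤ s) :
    s ^ (2 * 2 ^ q) * ν.real {ω | s ≤ specNorm ((MvPolynomial.eval (F ω)).mapMatrix A)} ≤
      ∫ ω, MvPolynomial.eval (F ω) (frobeniusSqPow A (2 ^ q)) ∂ν := by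
  refine le_trans ?_ (mul_meas_ge_le_integral_of_nonneg
    (Filter.Eventually.of_forall fun ω => eval_frobeniusSqPow_nonneg A (2 ^ q) (F ω))
    (HasAllMoments.mvPolynomial_eval hF _).integrable (s ^ (2 * 2 ^ q)))
  exact mul_le_mul_of_nonneg_left (measureReal_mono fun ω hω =>
    (pow_le_pow_left₀ hs hω _).trans (specNorm_pow_le_eval_frobeniusSqPow hA q (F ω)))
    (by positivity)

theorem sq_pow_mul_measureReal_specNorm_le [Fintype σ] [DecidableEq σ] {ν : Measure Ω}
    [IsFiniteMeasure ν] {F : Ω → σ → ℝ} (hF : ∀ i, HasAllMoments (fun ω => F ω i) ν) (hA : A.IsSymm)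
    (hdeg : ∀ a b, (A a b).totalDegree ≤ d) {s t : ℝ} (hs : 0 ≤ s)
    (htail : (9 ^ (2 * (2 ^ q * d))) ^ 2 * (stdGaussianPi σ).real
      {x | t ≤ specNorm ((MvPolynomial.eval x).mapMatrix A)} ≤ 1 / 4) :
    (s ^ (2 * 2 ^ q) *
        ν.real {ω | s ≤ specNorm ((MvPolynomial.eval (F ω)).mapMatrix A)}) ^ 2 ≤
      lowDegreeNormSq F ν (2 * (2 ^ q * d)) * (2 * (m * t ^ (2 * 2 ^ q)) ^ 2) := by
  have hL : 0 ≤ lowDegreeNormSq F ν (2 * (2 ^ q * d)) := by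
    unfold lowDegreeNormSq
    positivity
  calc (s ^ (2 * 2 ^ q) *
        ν.real {ω | s ≤ specNorm ((MvPolynomial.eval (F ω)).mapMatrix A)}) ^ 2
      ≤ (∫ ω, MvPolynomial.eval (F ω) (frobeniusSqPow A (2 ^ q)) ∂ν) ^ 2 := by
        gcongr
        exact pow_mul_measureReal_le_integral_frobeniusSqPow hF hA hs
    _ ≤ lowDegreeNormSq F ν (2 * (2 ^ q * d)) * gaussianExp (frobeniusSqPow A (2 ^ q) ^ 2) :=
        sq_integral_eval_le_lowDegreeNormSq_mul hF (totalDegree_frobeniusSqPow_le hdeg _)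
    _ ≤ _ := by
        gcongr
        exact gaussianExp_frobeniusSqPow_sq_le hA hdeg htail

end Distinguisher

/-! ### Indistinguishability -/

section Entries

variable {ι κ : Type*} [Fintype ι] [Fintype κ]

lemma measurePreserving_pi_entries {X : Type*} [MeasurableSpace X] (μ : Measure X)
    [IsProbabilityMeasure μ] :
    MeasurePreserving (fun (Y : ι → κ → X) (q : ι × κ) => Y q.1 q.2)
      (Measure.pi fun _ => Measure.pi fun _ => μ) (Measure.pi fun _ => μ) := by
  have huncurry := Measure.infinitePi_map_curry_symm fun (_ : ι) (_ : κ) => μ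
  simp only [Measure.infinitePi_eq_pi] at huncurry
  exact ⟨by fun_prop, huncurry⟩

lemma measurePreserving_sqrt_mul_entries {N : ℕ} (hN : 0 < N) :
    MeasurePreserving (fun (Y : ι → κ → ℝ) (q : ι × κ) => √N * Y q.1 q.2)
      (Measure.pi fun _ => Measure.pi fun _ => gaussianReal 0 (N : NNReal)⁻¹)
      (stdGaussianPi (ι × κ)) :=
  (measurePreserving_pi _ _ fun _ => measurePreserving_sqrt_mul_gaussianReal hN).comp
    (measurePreserving_pi_entries _)

end Entries

section Rescaling

variable {σ : Type*}

lemma exists_totalDegree_le_eval_smul {c : ℝ} (hc : c ≠ 0) (p : MvPolynomial σ ℝ) :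
    ∃ r : MvPolynomial σ ℝ, r.totalDegree ≤ p.totalDegree ∧
      ∀ x : σ → ℝ, MvPolynomial.eval (c • x) r = MvPolynomial.eval x p := by
  refine ⟨MvPolynomial.aeval (fun i => MvPolynomial.C c⁻¹ * MvPolynomial.X i) p, ?_, fun x => ?_⟩
  · rw [MvPolynomial.aeval_def, MvPolynomial.eval₂_eq]
    refine MvPolynomial.totalDegree_finsetSum_le fun u hu =>
      (MvPolynomial.totalDegree_mul _ _).trans ?_
    rw [MvPolynomial.algebraMap_eq, MvPolynomial.totalDegree_C, zero_add]
    refine (MvPolynomial.totalDegree_finsetProd _ _).trans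
      (le_trans (Finset.sum_le_sum fun i _ => ?_) (MvPolynomial.le_totalDegree hu))
    calc ((MvPolynomial.C c⁻¹ * MvPolynomial.X i : MvPolynomial σ ℝ) ^ u i).totalDegree
        ≤ u i * (0 + 1) := (MvPolynomial.totalDegree_pow _ _).trans (by
          gcongr
          refine (MvPolynomial.totalDegree_mul _ _).trans ?_
          rw [MvPolynomial.totalDegree_C, MvPolynomial.totalDegree_X])
      _ = u i := by rw [zero_add, mul_one]
  · rw [MvPolynomial.aeval_def, MvPolynomial.algebraMap_eq, ← MvPolynomial.eval_assoc]
    congr 2 with i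
    simp [hc]

lemma exists_isSymm_eval_smul_eq {m d : ℕ} {c : ℝ} (hc : c ≠ 0)
    {M : (σ → ℝ) → Matrix (Fin m) (Fin m) ℝ} (hsymm : ∀ x, (M x).IsSymm)
    (hM : ∀ a b, ∃ p : MvPolynomial σ ℝ, p.totalDegree ≤ d ∧
      ∀ x, M x a b = MvPolynomial.eval x p) :
    ∃ A : Matrix (Fin m) (Fin m) (MvPolynomial σ ℝ), A.IsSymm ∧
      (∀ a b, (A a b).totalDegree ≤ d) ∧
      ∀ x, (MvPolynomial.eval (c • x)).mapMatrix A = M x := by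
  choose p hdeg hp using hM
  choose r hrdeg hr using fun a b => exists_totalDegree_le_eval_smul hc (p a b)
  have heval : ∀ x, (MvPolynomial.eval (c • x)).mapMatrix (Matrix.of r) = M x := fun x => by
    ext a b
    simp [hr, hp]
  refine ⟨Matrix.of r, ?_, fun a b => (hrdeg a b).trans (hdeg a b), heval⟩
  ext a b : 1
  refine MvPolynomial.funext fun x => ?_
  have hx := congrFun₂ ((congrArg Matrix.transpose (heval (c⁻¹ • x))).trans
    ((hsymm _).trans (heval (c⁻¹ • x)).symm)) a b
  simpa [smul_smul, hc] using hx

end Rescaling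

section Parameters

variable {N : ℕ} {κ D : ℝ}

lemma four_mul_pow_nine_mul_le_sq {x : ℝ} (hD0 : 0 ≤ D) (hκ : 4 * κ ^ 9 ≤ Real.log N)
    (hD : D ≤ κ * Real.log N) (hx : √N * Real.log N ^ 5 ≤ x) : 4 * D ^ 9 * N ≤ x ^ 2 := by
  have := Real.log_natCast_nonneg N
  calc 4 * D ^ 9 * N ≤ 4 * (κ * Real.log N) ^ 9 * N := by gcongr
    _ = 4 * κ ^ 9 * (Real.log N ^ 9 * N) := by ring
    _ ≤ Real.log N * (Real.log N ^ 9 * N) := by gcongr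
    _ = (√N * Real.log N ^ 5) ^ 2 := by
      rw [mul_pow, Real.sq_sqrt N.cast_nonneg]
      ring
    _ ≤ x ^ 2 := by gcongr

lemma sq_nine_pow_mul_rpow_le {D : ℕ} (hN : 2 ≤ N) (hD : D ≤ κ * Real.log N) :
    ((9 : ℝ) ^ D) ^ 2 * (N : ℝ) ^ (-(2 * κ * Real.log 9 + 2)) ≤ 1 / 4 := by
  have hN2 : (2 : ℝ) ≤ N := by exact_mod_cast hN
  have hN0 : (0 : ℝ) < N := by linarith
  have h9 : 0 ≤ Real.log 9 := Real.log_nonneg (by norm_num)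
  have nine_pow_le : ((9 : ℝ) ^ D) ^ 2 ≤ (N : ℝ) ^ (2 * κ * Real.log 9) := by
    rw [← pow_mul, ← Real.rpow_natCast, Real.rpow_def_of_pos (by norm_num : (0 : ℝ) < 9),
      Real.rpow_def_of_pos hN0, Real.exp_le_exp]
    push_cast
    nlinarith
  calc ((9 : ℝ) ^ D) ^ 2 * (N : ℝ) ^ (-(2 * κ * Real.log 9 + 2))
      ≤ (N : ℝ) ^ (2 * κ * Real.log 9) * (N : ℝ) ^ (-(2 * κ * Real.log 9 + 2)) := by gcongr
    _ = ((N : ℝ) ^ 2)⁻¹ := by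
      rw [← Real.rpow_add hN0, ← Real.rpow_natCast, ← Real.rpow_neg hN0.le]
      congr 1
      push_cast
      ring
    _ ≤ (2 ^ 2)⁻¹ := by gcongr
    _ = 1 / 4 := by norm_num

lemma seven_mul_lt_pow_of_le_rpow {l a : ℝ} {m K : ℕ} (hN : 7 ≤ N) (hl : 0 ≤ l) (ha : 1 < a)
    (hK : (l + 2) / Real.log a * Real.log N ≤ K) (hm : (m : ℝ) ≤ (N : ℝ) ^ l) :
    7 * (m : ℝ) < a ^ (2 * K) := by
  have hN7 : (7 : ℝ) ≤ N := by exact_mod_cast hN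
  have hN0 : (0 : ℝ) < N := by linarith
  have hlog := Real.log_pos ha
  rw [div_mul_eq_mul_div, div_le_iff₀ hlog] at hK
  calc 7 * (m : ℝ) ≤ (N : ℝ) ^ (1 : ℝ) * (N : ℝ) ^ l := by
        rw [Real.rpow_one]
        gcongr
    _ = (N : ℝ) ^ (1 + l) := (Real.rpow_add hN0 1 l).symm
    _ < (N : ℝ) ^ (2 * (l + 2)) :=
      Real.rpow_lt_rpow_of_exponent_lt (by linarith) (by linarith)
    _ ≤ a ^ (2 * K) := by
      rw [← Real.rpow_natCast, Real.rpow_def_of_pos (by linarith : 0 < a),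
        Real.rpow_def_of_pos hN0, Real.exp_le_exp]
      push_cast
      linarith

lemma exists_two_pow_between {x : ℝ} (hx : 1 ≤ x) : ∃ q : ℕ, x ≤ 2 ^ q ∧ (2 : ℝ) ^ q ≤ 2 * x := by
  obtain ⟨q, hle, hlt⟩ := exists_nat_pow_near hx one_lt_two
  exact ⟨q + 1, hlt.le, by rw [pow_succ]; linarith⟩

end Parameters

/-- The spectral norm of an `m × m` matrix is compared with moments of order `2 * 2 ^ q`: large
enough, a multiple of `log N`, for the gap `a` to beat the dimension factor `m`, yet of
degree `O(log N)`, where the likelihood ratio is still bounded. -/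
lemma exists_moment_order {l a : ℝ} (hl : 0 ≤ l) (ha : 1 < a) (d : ℕ) :
    ∃ N₀ : ℕ, ∃ C₁ : ℝ, 0 < C₁ ∧ ∀ N : ℕ, N₀ ≤ N → 0 < N ∧ ∃ q : ℕ,
      (∀ x : ℝ, √N * Real.log N ^ 5 ≤ x → 4 * ((2 * (2 ^ q * d) : ℕ) : ℝ) ^ 9 * N ≤ x ^ 2) ∧
      (9 ^ (2 * (2 ^ q * d))) ^ 2 * (N : ℝ) ^ (-C₁) ≤ 1 / 4 ∧
      ∀ m : ℕ, (m : ℝ) ≤ (N : ℝ) ^ l → 7 * (m : ℝ) < a ^ (2 * 2 ^ q) := by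
  have hlog := Real.log_pos ha
  set κ₀ : ℝ := (l + 2) / Real.log a + 1
  set κ : ℝ := 4 * d * κ₀ with hκ
  have hκ₀1 : 1 ≤ κ₀ := le_add_of_nonneg_left (by positivity)
  have : 0 ≤ Real.log 9 := Real.log_nonneg (by norm_num)
  refine ⟨max 7 ⌈Real.exp (4 * κ ^ 9 + 1)⌉₊, 2 * κ * Real.log 9 + 2, by positivity,
    fun N hN => ?_⟩
  have hN7 : 7 ≤ N := (le_max_left _ _).trans hN
  have hN0 : 0 < N := by omega
  have hlogN : 4 * κ ^ 9 + 1 ≤ Real.log N := (Real.le_log_iff_exp_le (by exact_mod_cast hN0)).2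
    ((Nat.le_ceil _).trans (by exact_mod_cast (le_max_right _ _).trans hN))
  have hlogN1 : 1 ≤ Real.log N := le_trans (le_add_of_nonneg_left (by positivity)) hlogN
  obtain ⟨q, hqle, hqge⟩ :=
    exists_two_pow_between (one_le_mul_of_one_le_of_one_le hκ₀1 hlogN1)
  have hD : ((2 * (2 ^ q * d) : ℕ) : ℝ) ≤ κ * Real.log N := by
    push_cast
    calc (2 : ℝ) * (2 ^ q * d) ≤ 2 * (2 * (κ₀ * Real.log N) * d) := by gcongr
      _ = κ * Real.log N := by
        rw [hκ]
        ring
  have hK : (l + 2) / Real.log a * Real.log N ≤ (2 ^ q : ℕ) := by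
    push_cast
    exact le_trans (by gcongr; linarith) hqle
  exact ⟨hN0, q,
    fun x hx => four_mul_pow_nine_mul_le_sq (Nat.cast_nonneg _) (by linarith) hD hx,
    sq_nine_pow_mul_rpow_le (by omega) hD, fun m hm => seven_mul_lt_pow_of_le_rpow hN7 hl ha hK hm⟩

section Indistinguishable

variable {N n m d q : ℕ} {ρ : ℝ} {μQ : Measure (Fin n → Fin n → ℝ)}

lemma measure_map_planted_le_specNorm [IsProbabilityMeasure μQ] (hμQ : IsOrthogonalHaar μQ)
    (h0 : 0 ≤ ρ) (h1 : ρ ≤ 1) (hN : 0 < N)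
    {M : (Fin N → Fin n → ℝ) → Matrix (Fin m) (Fin m) ℝ}
    {A : Matrix (Fin m) (Fin m) (MvPolynomial (Fin N × Fin n) ℝ)}
    (hMA : ∀ Y, M Y = (MvPolynomial.eval fun q => √N * Y q.1 q.2).mapMatrix A) (s : ℝ) :
    Measure.map (fun w => fun i j => (gaussBasis w.1 w.2.2 * Matrix.of w.2.1) i j)
        (plantedLaw N n (brMeasure N ρ) μQ) {Y | s ≤ specNorm (M Y)} =
      plantedLaw N n (brMeasure N ρ) μQ
        {w | s ≤ specNorm ((MvPolynomial.eval (plantedEntry w)).mapMatrix A)} := by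
  have := isProbabilityMeasure_brMeasure N h0 h1
  have hsqrt : √(N : ℝ) ≠ 0 := by positivity
  have hentry : ∀ i j, AEMeasurable (fun w => (gaussBasis w.1 w.2.2 * Matrix.of w.2.1) i j)
      (plantedLaw N n (brMeasure N ρ) μQ) := fun i j => by
    have hscaled := (hasAllMoments_plantedEntry (hasAllMoments_id_brMeasure N ρ) hμQ
      (i, j)).memLp_two.aestronglyMeasurable.aemeasurable.const_mul (√N)⁻¹
    simpa only [plantedEntry, inv_mul_cancel_left₀ hsqrt] using hscaled
  have hmeas : Measurable fun Y => specNorm (M Y) := by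
    simp only [hMA]
    exact (continuous_specNorm_eval A).measurable.comp (by fun_prop)
  rw [Measure.map_apply_of_aemeasurable
    (aemeasurable_pi_lambda _ fun i => aemeasurable_pi_lambda _ (hentry i))
    (measurableSet_le measurable_const hmeas)]
  simp only [hMA]
  rfl

lemma measure_pi_le_specNorm (hN : 0 < N) {M : (Fin N → Fin n → ℝ) → Matrix (Fin m) (Fin m) ℝ}
    {A : Matrix (Fin m) (Fin m) (MvPolynomial (Fin N × Fin n) ℝ)}
    (hMA : ∀ Y, M Y = (MvPolynomial.eval fun q => √N * Y q.1 q.2).mapMatrix A) (t : ℝ) :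
    (Measure.pi fun _ : Fin N => Measure.pi fun _ : Fin n => gaussianReal 0 (N : NNReal)⁻¹)
        {Y | t ≤ specNorm (M Y)} =
      stdGaussianPi (Fin N × Fin n)
        {x | t ≤ specNorm ((MvPolynomial.eval x).mapMatrix A)} := by
  rw [← (measurePreserving_sqrt_mul_entries hN).measure_preimage
    (measurableSet_le measurable_const (continuous_specNorm_eval A).measurable).nullMeasurableSet]
  simp only [hMA]
  rfl

lemma le_seven_mul_of_sq_le {u T c x : ℝ} (hT : 0 < T) (hc : 3 / 4 ≤ c) (hx : 0 ≤ x)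
    (h : (u * T * c) ^ 2 ≤ 12 * (2 * (x * T) ^ 2)) : u ≤ 7 * x := by
  have hle : u * T * c ≤ 5 * (x * T) := by
    refine (abs_le_of_sq_le_sq' (h.trans ?_) (by positivity)).2
    linarith [sq_nonneg (x * T)]
  by_contra! hu
  have hu0 : 0 < u := lt_of_le_of_lt (by positivity) hu
  have hlt : 7 * x * T * (3 / 4) < u * T * c := by
    calc 7 * x * T * (3 / 4) < u * T * (3 / 4) := by gcongr
      _ ≤ u * T * c := by gcongr
  nlinarith [mul_nonneg hx hT.le]

theorem plantedLaw_real_specNorm_lt [NeZero n] [IsProbabilityMeasure μQ] (hμQ : IsOrthogonalHaar μQ)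
    (hnN : n ≤ N) (h0 : 0 < ρ) (h1 : ρ ≤ 1)
    {A : Matrix (Fin m) (Fin m) (MvPolynomial (Fin N × Fin n) ℝ)} (hA : A.IsSymm)
    (hdeg : ∀ a b, (A a b).totalDegree ≤ d) (hd : 1 ≤ d)
    (hD : 4 * ((2 * (2 ^ q * d) : ℕ) : ℝ) ^ 9 * N ≤ (n * ρ) ^ 2) {a t : ℝ} (ha : 0 ≤ a)
    (hm : 7 * (m : ℝ) < a ^ (2 * 2 ^ q)) (ht : 0 < t)
    (htail : (9 ^ (2 * (2 ^ q * d))) ^ 2 * (stdGaussianPi (Fin N × Fin n)).real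
      {x | t ≤ specNorm ((MvPolynomial.eval x).mapMatrix A)} ≤ 1 / 4) :
    (plantedLaw N n (brMeasure N ρ) μQ).real
      {w | a * t ≤ specNorm ((MvPolynomial.eval (plantedEntry w)).mapMatrix A)} < 3 / 4 := by
  have := isProbabilityMeasure_brMeasure N h0.le h1
  by_contra! hprob
  refine hm.not_ge (le_seven_mul_of_sq_le (T := t ^ (2 * 2 ^ q)) (by positivity) hprob
    (by positivity) ?_)
  rw [← mul_pow]
  refine (sq_pow_mul_measureReal_specNorm_le
    (hasAllMoments_plantedEntry (hasAllMoments_id_brMeasure N ρ) hμQ) hA hdeg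
    (by positivity) htail).trans ?_
  gcongr
  exact lowDegreeNormSq_brMeasure_le_twelve hnN h0 h1 hμQ
    (by have : 0 < 2 ^ q * d := by positivity
        omega) hD

end Indistinguishable

/-- failure of all low-degree spectral methods: for the detection problem
with null `𝒬` (i.i.d. `N(0,1/N)` entries) and planted `𝒫` (`Ỹ = YQ`, `v ∼ BR(N,ρ)`, `Q`
Haar-uniform orthogonal), there is a universal constant `C₂ > 0`, and for any constants
`ℓ ≥ 1`, `d ≥ 1`, `ε ∈ (0,1)` there exist `N₀` and `C₁ > 0`, such that for all `N ≥ N₀`: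
for any symmetric matrix `M(Ỹ)` of dimension `m ≤ N^ℓ` whose entries are polynomials of
degree at most `d` in the entries of `Ỹ`, and any threshold `t > 0`, if
`nρ ≥ √N (log N)^{C₂}` then it is impossible that both
`ℙ_𝒫{‖M‖ ≥ (1+ε)t} ≥ 1 - ε/4` and `ℙ_𝒬{‖M‖ ≥ t} ≤ N^{-C₁}`. -/
theorem stmt_13 :
    ∃ C₂ : ℝ, 0 < C₂ ∧
      ∀ (l : ℝ), 1 ≤ l → ∀ (d : ℕ), 1 ≤ d → ∀ (ε : ℝ), 0 < ε → ε < 1 →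
        ∃ N₀ : ℕ, ∃ C₁ : ℝ, 0 < C₁ ∧
          ∀ N n : ℕ, ∀ ρ : ℝ, N₀ ≤ N → 1 ≤ n → n ≤ N → 0 < ρ → ρ ≤ 1 →
            Real.sqrt N * (Real.log N) ^ C₂ ≤ (n : ℝ) * ρ →
            ∀ (μQ : Measure (Fin n → Fin n → ℝ)) [IsProbabilityMeasure μQ],
              (∀ᵐ Q ∂μQ, (Matrix.of Q)ᵀ * Matrix.of Q = 1) →
              (∀ R : Matrix (Fin n) (Fin n) ℝ, Rᵀ * R = 1 →
                Measure.map (fun Q => fun i j => (R * Matrix.of Q) i j) μQ = μQ) →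
            ∀ (m : ℕ), (m : ℝ) ≤ (N : ℝ) ^ l →
            ∀ M : (Fin N → Fin n → ℝ) → Matrix (Fin m) (Fin m) ℝ,
              (∀ Y, (M Y)ᵀ = M Y) →
              (∀ a b : Fin m, ∃ p : MvPolynomial (Fin N × Fin n) ℝ,
                p.totalDegree ≤ d ∧
                ∀ Y, M Y a b = MvPolynomial.eval (fun q => Y q.1 q.2) p) →
            ∀ t : ℝ, 0 < t →
              ¬ (ENNReal.ofReal (1 - ε / 4) ≤
                    (Measure.map
                      (fun w : (Fin N → ℝ) × (Fin n → Fin n → ℝ)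
                          × (Fin N → Fin (n - 1) → ℝ) =>
                        fun i j => (gaussBasis w.1 w.2.2 * Matrix.of w.2.1) i j)
                      ((brVec N ρ).prod
                        (μQ.prod (iidGaussVec N (n - 1) ((N : NNReal))⁻¹))))
                      {Y | (1 + ε) * t ≤ specNorm (M Y)}
                  ∧ (Measure.pi fun _ : Fin N =>
                        (Measure.pi fun _ : Fin n => gaussianReal 0 ((N : NNReal))⁻¹))
                      {Y | t ≤ specNorm (M Y)}
                    ≤ ENNReal.ofReal ((N : ℝ) ^ (-C₁))) := by
  refine ⟨5, by norm_num, fun l hl d hd ε hε0 hε1 => ?_⟩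
  obtain ⟨N₀, C₁, hC₁, hN₀⟩ :=
    exists_moment_order (zero_le_one.trans hl) (lt_add_of_pos_right 1 hε0) d
  refine ⟨N₀, C₁, hC₁, fun N n ρ hN hn hnN h0 h1 hρ μQ _ hQ hinv m hm M hsymm hM t ht
    ⟨hP, hNull⟩ => ?_⟩
  have : NeZero n := ⟨by omega⟩
  have hμQ : IsOrthogonalHaar μQ := ⟨hQ, hinv⟩
  obtain ⟨hN0, q, hdegree, htail, hdim⟩ := hN₀ N hN
  rw [Real.rpow_ofNat] at hρ
  obtain ⟨A, hA, hdeg, hMA⟩ := exists_isSymm_eval_smul_eq (c := √N) (by positivity)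
    (M := fun x => M fun i j => x (i, j)) (fun _ => hsymm _) fun a b =>
      (hM a b).imp fun _ hp => ⟨hp.1, fun _ => hp.2 _⟩
  have hMA' : ∀ Y, M Y = (MvPolynomial.eval fun q => √N * Y q.1 q.2).mapMatrix A :=
    fun Y => (hMA fun q => Y q.1 q.2).symm
  have hnull := ENNReal.toReal_le_of_le_ofReal (by positivity)
    ((measure_pi_le_specNorm hN0 hMA' t).symm.trans_le hNull)
  have hlt := plantedLaw_real_specNorm_lt hμQ hnN h0 h1 hA hdeg hd (hdegree _ hρ)
    (by positivity) (hdim m hm) ht ((mul_le_mul_of_nonneg_left hnull (by positivity)).trans htail)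
  have := isProbabilityMeasure_brMeasure N h0.le h1
  have hle := (ENNReal.ofReal_le_iff_le_toReal (measure_ne_top _ _)).1
    (hP.trans_eq (measure_map_planted_le_specNorm hμQ h0.le h1 hN0 hMA' _))
  rw [measureReal_def] at hlt
  linarith
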